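/- arXiv:1001.5160 — 8 statements merged into one kernel-verified Lean document; each statement's English description precedes it below -/
import Mathlib

section
/- Let c(ε) = ∫₀¹ ∫_x^{x+1} e^{ε^{-2}(S(y)−S(x))} dy dx and μ^ε(x) = c(ε)^{-1} ∫_x^{x+1} e^{ε^{-2}(S(y)−S(x))} dy. Then for every x ∈ ℝ, lim_{ε↓0} −ε² log μ^ε(x) = max_{x'∈[0,1]} max_{y'∈[x',x'+1]} (S(y')−S(x')) − max_{y∈[x,x+1]} (S(y)−S(x)), which also equals min_{y∈[x,x+1]} (S(x)−S(y)) − min_{x'∈[0,1]} min_{y'∈[x',x'+1]} (S(x')−S(y')). -/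
open Set Filter Topology

/-!
By Laplace's principle, `t⁻¹ log ∫_A e^{tF} dν → max_A F` as `t → ∞`: the integral is at most
`ν(A) e^{t max F}`, and the Chernoff bound gives at least `ν{F ≥ a} e^{ta}` for every `a < max F`.
The numerator of `μ^ε(x)` is such an integral over `[x, x + 1]`; the substitution `y = x' + s` turns
`c(ε)` into one over the unit square. With `t = ε⁻²`, the limit is the difference of the two maxima.
-/

open MeasureTheory ProbabilityTheory Real

section Laplace

variable {Ω : Type*} [MeasurableSpace Ω] {ν : Measure Ω} [IsFiniteMeasure ν] {X : Ω → ℝ}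

lemma cgf_le_log_measureReal_univ_add_mul {M t : ℝ} (hν : ν ≠ 0) (hX : AEMeasurable X ν)
    (hXM : ∀ᵐ ω ∂ν, X ω ≤ M) (ht : 0 ≤ t) : cgf X ν t ≤ log (ν.real univ) + t * M := by
  rw [← cgf_const' hν]
  exact log_le_log (mgf_pos' hν (integrable_exp_mul_of_le t M ht hX hXM))
    (mgf_mono_of_nonneg hXM ht (integrable_const _))

lemma log_measureReal_ge_add_mul_le_cgf {a t : ℝ} (ha : ν {ω | a ≤ X ω} ≠ 0) (ht : 0 ≤ t)
    (hint : Integrable (fun ω ↦ exp (t * X ω)) ν) :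
    log (ν.real {ω | a ≤ X ω}) + t * a ≤ cgf X ν t := by
  have hpos : 0 < ν.real {ω | a ≤ X ω} := ENNReal.toReal_pos ha (measure_ne_top ν _)
  have chernoff := log_le_log hpos (measure_ge_le_exp_cgf a ht hint)
  rw [log_exp] at chernoff
  linarith

theorem tendsto_cgf_div_atTop {M : ℝ} (hX : AEMeasurable X ν) (hXM : ∀ᵐ ω ∂ν, X ω ≤ M)
    (hM : ∀ a < M, ∃ᵐ ω ∂ν, a ≤ X ω) : Tendsto (fun t ↦ cgf X ν t / t) atTop (𝓝 M) := by
  have tendsto_add (r a : ℝ) : Tendsto (fun t : ℝ ↦ r / t + a) atTop (𝓝 a) := by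
    simpa using (tendsto_const_nhds.div_atTop tendsto_id).add_const a
  have hν : ν ≠ 0 := by
    rintro rfl
    simpa using hM (M - 1) (by linarith)
  refine tendsto_order.2 ⟨fun a haM ↦ ?_, fun a hMa ↦ ?_⟩
  · obtain ⟨a', haa', ha'M⟩ := exists_between haM
    filter_upwards [(tendsto_add (log (ν.real {ω | a' ≤ X ω})) a').eventually_const_lt haa',
      eventually_gt_atTop 0] with t hlt ht
    have lower := log_measureReal_ge_add_mul_le_cgf (frequently_ae_iff.1 (hM a' ha'M)) ht.le
      (integrable_exp_mul_of_le t M ht.le hX hXM)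
    refine hlt.trans_le ((le_div_iff₀ ht).2 ?_)
    rwa [add_mul, div_mul_cancel₀ _ ht.ne', mul_comm a']
  · filter_upwards [(tendsto_add (log (ν.real univ)) M).eventually_lt_const hMa,
      eventually_gt_atTop 0] with t hlt ht
    have upper := cgf_le_log_measureReal_univ_add_mul hν hX hXM ht.le
    refine ((div_le_iff₀ ht).2 ?_).trans_lt hlt
    rwa [add_mul, div_mul_cancel₀ _ ht.ne', mul_comm M]

end Laplace

section Compact

variable {E : Type*} [TopologicalSpace E] [T2Space E] [MeasurableSpace E] [OpensMeasurableSpace E]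
  {ν : Measure E} [IsFiniteMeasureOnCompacts ν] {A : Set E} {F : E → ℝ}

lemma mgf_restrict_pos_of_isCompact (hA : IsCompact A) (hνA : ν A ≠ 0) (hF : ContinuousOn F A)
    (t : ℝ) : 0 < mgf F (ν.restrict A) t :=
  mgf_pos' (Measure.restrict_eq_zero.not.2 hνA)
    (ContinuousOn.integrableOn_compact hA (by fun_prop))

theorem tendsto_cgf_restrict_div_atTop [ν.IsOpenPosMeasure] (hA : IsCompact A) (hne : A.Nonempty)
    (hcl : A ⊆ closure (interior A)) (hF : ContinuousOn F A) :
    Tendsto (fun t ↦ cgf F (ν.restrict A) t / t) atTop (𝓝 (sSup (F '' A))) := by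
  obtain ⟨p, hpA, hp⟩ := hA.exists_sSup_image_eq hne hF
  have : IsFiniteMeasure (ν.restrict A) := isFiniteMeasure_restrict.2 hA.measure_ne_top
  refine tendsto_cgf_div_atTop (hF.aemeasurable hA.measurableSet) ?_ fun a ha ↦ ?_
  · filter_upwards [ae_restrict_mem hA.measurableSet] with q hq
    exact le_csSup (hA.bddAbove_image hF) (mem_image_of_mem F hq)
  · obtain ⟨U, hU, hUA⟩ := continuousOn_iff'.1 hF (Ioi a) isOpen_Ioi
    have hpU : p ∈ U := (hUA.subset ⟨ha.trans_eq hp, hpA⟩).1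
    have hUint : (U ∩ interior A).Nonempty := mem_closure_iff.1 (hcl hpA) U hU hpU
    have hUa : U ∩ interior A ⊆ {q | a ≤ F q} ∩ A := fun q hq ↦
      have hqA := interior_subset hq.2
      have hqa : a < F q := (hUA.superset ⟨hq.1, hqA⟩).1
      ⟨hqa.le, hqA⟩
    rw [frequently_ae_iff, Measure.restrict_apply' hA.measurableSet]
    exact (((hU.inter isOpen_interior).measure_pos ν hUint).trans_le (measure_mono hUa)).ne'

end Compact

section Intervals

variable {a b : ℝ}

lemma tendsto_cgf_Icc_div_atTop {F : ℝ → ℝ} (hF : ContinuousOn F (Icc a b)) (hab : a < b) :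
    Tendsto (fun t ↦ cgf F (volume.restrict (Icc a b)) t / t) atTop
      (𝓝 (sSup (F '' Icc a b))) :=
  tendsto_cgf_restrict_div_atTop isCompact_Icc (nonempty_Icc.2 hab.le)
    (closure_interior_Icc hab.ne).superset hF

lemma tendsto_cgf_Icc_prod_Icc_div_atTop {F : ℝ × ℝ → ℝ} {a' b' : ℝ}
    (hF : ContinuousOn F (Icc a b ×ˢ Icc a' b')) (hab : a < b) (hab' : a' < b') :
    Tendsto (fun t ↦ cgf F (volume.restrict (Icc a b ×ˢ Icc a' b')) t / t) atTop
      (𝓝 (sSup (F '' Icc a b ×ˢ Icc a' b'))) := by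
  refine tendsto_cgf_restrict_div_atTop (isCompact_Icc.prod isCompact_Icc)
    ((nonempty_Icc.2 hab.le).prod (nonempty_Icc.2 hab'.le)) ?_ hF
  rw [interior_prod_eq, closure_prod_eq,
    closure_interior_Icc hab.ne, closure_interior_Icc hab'.ne]

lemma intervalIntegral_exp_eq_mgf (F : ℝ → ℝ) (hab : a ≤ b) (t : ℝ) :
    ∫ y in a..b, exp (t * F y) = mgf F (volume.restrict (Icc a b)) t := by
  rw [intervalIntegral.integral_of_le hab, ← integral_Icc_eq_integral_Ioc, mgf]

end Intervals

section Suprema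

variable {α β : Type*}

lemma sSup_image_sSup_image_eq_sSup_image_prod {L : Type*} [ConditionallyCompleteLattice L]
    {f : α → β → L} {A : Set α} {B : Set β} (hf : BddAbove (f.uncurry '' A ×ˢ B)) :
    sSup ((fun a ↦ sSup (f a '' B)) '' A) = sSup (f.uncurry '' A ×ˢ B) := by
  have himage : f.uncurry '' A ×ˢ B = range fun p : A × B ↦ f p.1 p.2 := by
    ext
    simp
  rw [himage] at hf ⊢
  simp only [sSup_image']
  exact (ciSup_prod hf).symm

lemma sInf_image_neg (f : α → ℝ) (A : Set α) :
    sInf ((fun a ↦ -f a) '' A) = -sSup (f '' A) := by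
  rw [← Real.sInf_neg, ← image_neg_eq_neg, image_image]

lemma sInf_image_const_sub (f : α → ℝ) (r : ℝ) (A : Set α) :
    sInf ((fun a ↦ r - f a) '' A) = -sSup ((fun a ↦ f a - r) '' A) := by
  simp only [← sInf_image_neg, neg_sub]

end Suprema

section Increments

/-- The increment `S(x + s) - S(x)` of `S` as a function of the pair `(x, s)`. In these coordinates
the region `x ∈ [a, b]`, `y ∈ [x, x + ℓ]` becomes the rectangle `[a, b] × [0, ℓ]`. -/
def increment (S : ℝ → ℝ) (p : ℝ × ℝ) : ℝ := S (p.1 + p.2) - S p.1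

variable {S : ℝ → ℝ} {a b ℓ : ℝ}

lemma continuous_increment (hS : Continuous S) : Continuous (increment S) := by
  unfold increment
  fun_prop

lemma intervalIntegral_intervalIntegral_exp_eq_mgf_increment (hS : Continuous S) (hab : a ≤ b)
    (hℓ : 0 ≤ ℓ) (t : ℝ) :
    ∫ x in a..b, ∫ y in x..(x + ℓ), exp (t * (S y - S x)) =
      mgf (increment S) (volume.restrict (Icc a b ×ˢ Icc 0 ℓ)) t := by
  have hint : IntegrableOn (fun p ↦ exp (t * increment S p)) (Icc a b ×ˢ Icc 0 ℓ) := by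
    have := continuous_increment hS
    exact ContinuousOn.integrableOn_compact (isCompact_Icc.prod isCompact_Icc) (by fun_prop)
  have shift (x : ℝ) : ∫ y in x..(x + ℓ), exp (t * (S y - S x)) =
      ∫ s in Icc 0 ℓ, exp (t * increment S (x, s)) := by
    rw [integral_Icc_eq_integral_Ioc, ← intervalIntegral.integral_of_le hℓ]
    simpa [increment] using (intervalIntegral.integral_comp_add_left (a := 0) (b := ℓ)
      (fun y ↦ exp (t * (S y - S x))) x).symm
  simp only [shift]
  rw [mgf, Measure.volume_eq_prod, setIntegral_prod _ hint,
    intervalIntegral.integral_of_le hab, integral_Icc_eq_integral_Ioc]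

lemma sSup_image_sSup_image_sub_eq_sSup_image_increment (hS : Continuous S) :
    sSup ((fun x ↦ sSup ((fun y ↦ S y - S x) '' Icc x (x + ℓ))) '' Icc a b) =
      sSup (increment S '' Icc a b ×ˢ Icc 0 ℓ) := by
  have shift (x : ℝ) :
      (fun y ↦ S y - S x) '' Icc x (x + ℓ) = (fun s ↦ increment S (x, s)) '' Icc 0 ℓ := by
    have hIcc : Icc x (x + ℓ) = (x + ·) '' Icc 0 ℓ := by simp [add_comm]
    simp only [hIcc, image_image, increment]
  simp only [shift]
  exact sSup_image_sSup_image_eq_sSup_image_prod (f := fun x s ↦ increment S (x, s))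
    ((isCompact_Icc.prod isCompact_Icc).bddAbove_image (continuous_increment hS).continuousOn)

end Increments

lemma tendsto_inv_sq_nhdsGT_zero : Tendsto (fun ε : ℝ ↦ (ε ^ 2)⁻¹) (𝓝[>] 0) atTop := by
  simpa only [Function.comp_def, inv_pow] using (tendsto_pow_atTop two_ne_zero).comp
    (tendsto_inv_nhdsGT_zero (𝕜 := ℝ))

lemma neg_mul_log_inv_mul {p q r : ℝ} (hp : p ≠ 0) (hq : q ≠ 0) :
    -r * log (p⁻¹ * q) = log p / r⁻¹ - log q / r⁻¹ := by
  rw [log_mul (inv_ne_zero hp) hq, log_inv, div_inv_eq_mul, div_inv_eq_mul]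
  ring

theorem stmt_1_general (S : ℝ → ℝ) (hS : Continuous S) (c : ℝ → ℝ)
    (hc : ∀ ε : ℝ, 0 < ε →
      c ε = ∫ x in (0 : ℝ)..1, ∫ y in x..(x + 1), exp ((ε ^ 2)⁻¹ * (S y - S x)))
    (μ : ℝ → ℝ → ℝ)
    (hμ : ∀ ε : ℝ, 0 < ε → ∀ x,
      μ ε x = (c ε)⁻¹ * ∫ y in x..(x + 1), exp ((ε ^ 2)⁻¹ * (S y - S x)))
    (x : ℝ) :
    Tendsto (fun ε ↦ -(ε ^ 2) * log (μ ε x)) (𝓝[>] 0)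
      (𝓝 (sSup ((fun x' ↦ sSup ((fun y ↦ S y - S x') '' Icc x' (x' + 1))) '' Icc 0 1)
        - sSup ((fun y ↦ S y - S x) '' Icc x (x + 1)))) ∧
    sSup ((fun x' ↦ sSup ((fun y ↦ S y - S x') '' Icc x' (x' + 1))) '' Icc 0 1)
        - sSup ((fun y ↦ S y - S x) '' Icc x (x + 1))
      = sInf ((fun y ↦ S x - S y) '' Icc x (x + 1))
        - sInf ((fun x' ↦ sInf ((fun y ↦ S x' - S y) '' Icc x' (x' + 1))) '' Icc 0 1) := by
  have hx : x < x + 1 := lt_add_one x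
  have hwin : ContinuousOn (fun y ↦ S y - S x) (Icc x (x + 1)) := by fun_prop
  have hsq : ContinuousOn (increment S) (Icc 0 1 ×ˢ Icc 0 1) :=
    (continuous_increment hS).continuousOn
  refine ⟨?_, by simp only [sInf_image_const_sub, sInf_image_neg]; ring⟩
  rw [sSup_image_sSup_image_sub_eq_sSup_image_increment hS]
  refine (((tendsto_cgf_Icc_prod_Icc_div_atTop hsq one_pos one_pos).sub
    (tendsto_cgf_Icc_div_atTop hwin hx)).comp tendsto_inv_sq_nhdsGT_zero).congr' ?_
  filter_upwards [self_mem_nhdsWithin] with ε hε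
  rw [hμ ε hε, hc ε hε, intervalIntegral_exp_eq_mgf (fun y ↦ S y - S x) hx.le,
    intervalIntegral_intervalIntegral_exp_eq_mgf_increment hS zero_le_one zero_le_one]
  refine (neg_mul_log_inv_mul ?_ ?_).symm
  · exact (mgf_restrict_pos_of_isCompact (isCompact_Icc.prod isCompact_Icc)
      (by simp [Measure.volume_eq_prod, Measure.prod_prod, -Icc_prod_Icc]) hsq _).ne'
  · exact (mgf_restrict_pos_of_isCompact isCompact_Icc (by simp) hwin _).ne'

/-- small-noise large deviations of the invariant density `μ^ε`:
`lim_{ε↓0} −ε² log μ^ε(x) = max_{x'∈[0,1]} max_{y'∈[x',x'+1]} (S(y')−S(x'))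
  − max_{y∈[x,x+1]} (S(y)−S(x))`, which also equals
`min_{y∈[x,x+1]} (S(x)−S(y)) − min_{x'∈[0,1]} min_{y'∈[x',x'+1]} (S(x')−S(y'))`. -/
theorem stmt_1
    (b : ℝ → ℝ) (K : NNReal) (hb : LipschitzWith K b) (hbper : ∀ x, b (x + 1) = b x)
    (S : ℝ → ℝ) (hS : ∀ x, S x = -2 * ∫ t in (0:ℝ)..x, b t)
    (c : ℝ → ℝ)
    (hc : ∀ ε : ℝ, 0 < ε →
      c ε = ∫ x in (0:ℝ)..1, ∫ y in x..(x + 1), Real.exp ((ε ^ 2)⁻¹ * (S y - S x)))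
    (μ : ℝ → ℝ → ℝ)
    (hμ : ∀ ε : ℝ, 0 < ε → ∀ x,
      μ ε x = (c ε)⁻¹ * ∫ y in x..(x + 1), Real.exp ((ε ^ 2)⁻¹ * (S y - S x)))
    (x : ℝ) :
    Tendsto (fun ε => -(ε ^ 2) * Real.log (μ ε x)) (nhdsWithin 0 (Ioi 0))
      (nhds (sSup ((fun x' => sSup ((fun y => S y - S x') '' Icc x' (x' + 1))) '' Icc 0 1)
        - sSup ((fun y => S y - S x) '' Icc x (x + 1)))) ∧
    sSup ((fun x' => sSup ((fun y => S y - S x') '' Icc x' (x' + 1))) '' Icc 0 1)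
        - sSup ((fun y => S y - S x) '' Icc x (x + 1))
      = sInf ((fun y => S x - S y) '' Icc x (x + 1))
        - sInf ((fun x' => sInf ((fun y => S x' - S y) '' Icc x' (x' + 1))) '' Icc 0 1) := by
  have hScont : Continuous S := funext hS ▸ continuous_const.mul
    (intervalIntegral.continuous_primitive (fun _ _ ↦ hb.continuous.intervalIntegrable _ _) 0)
  exact stmt_1_general S hScont c hc μ hμ x
end

section
/- If S(1) ≠ 0 and S is not monotone, then the set U = {x ∈ ℝ : Φ(x) ≠ min{0, −S(1)}} is open and nonempty, and the complement ℝ \ U has nonempty interior. -/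
open Set Filter Topology

/-!
Because `S (x + 1) = S x + S 1`, the number `min 0 (-S 1)` is `S x - max (S x) (S (x + 1))`. So
`x ∈ U` exactly when `S` exceeds both of its endpoint values somewhere inside `(x, x + 1)`, which
is an open condition and is symmetric under the reflection `x ↦ -x`, reducing everything to
`S 1 > 0`.

If `a ≤ b` and `S b < S a`, translating `a` by periods into `(b - 1, b)` only raises its value, so
`b - 1 ∈ U`. For the complement, `S x - S 1 * x` is periodic and attains its maximum at some `z`.
There `S` lies below the line of slope `S 1` through `(z, S z)`, so `S z` is the largest value of
`S` on `(-∞, z]`, and `S' z = S 1 > 0`. Hence `S` increases near `z`, every `w` slightly to the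
right of `z` also maximizes `S` on `(-∞, w]`, and `w - 1 ∉ U`.
-/

open scoped AddConstMap

section Excursion

variable {G H : Type*} [LinearOrder H]

/-- The left endpoints of the windows `[x, x + T]` on which `f` exceeds both of its endpoint
values. For `f = S` and `T = 1` this is the set `U`. -/
def excursionSet [Add G] [Preorder G] (f : G → H) (T : G) : Set G :=
  {x | ∃ y ∈ Ioo x (x + T), max (f x) (f (x + T)) < f y}

theorem isOpen_excursionSet [Add G] [LinearOrder G] [TopologicalSpace G]
    [OrderClosedTopology G] [ContinuousAdd G] [TopologicalSpace H] [OrderClosedTopology H]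
    {f : G → H} (hf : Continuous f) (T : G) :
    IsOpen (excursionSet f T) := by
  have eq_iUnion : excursionSet f T =
      ⋃ y, {x | x < y} ∩ {x | y < x + T} ∩ {x | max (f x) (f (x + T)) < f y} := by
    ext x
    simp only [excursionSet, mem_Ioo, mem_ofPred_eq, mem_iUnion, mem_inter_iff]
  rw [eq_iUnion]
  refine isOpen_iUnion fun y => ((isOpen_lt ?_ ?_).inter (isOpen_lt ?_ ?_)).inter (isOpen_lt ?_ ?_)
    <;> fun_prop

theorem notMem_excursionSet_of_isMaxOn_Iic [Add G] [Preorder G] {f : G → H} {T x : G}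
    (hmax : IsMaxOn f (Iic (x + T)) (x + T)) : x ∉ excursionSet f T := by
  rintro ⟨y, hy, hlt⟩
  exact (hmax (mem_Iic.2 hy.2.le)).not_gt ((le_max_right _ _).trans_lt hlt)

theorem excursionSet_comp_neg [AddCommGroup G] [PartialOrder G] [IsOrderedAddMonoid G]
    (f : G → H) (T : G) :
    excursionSet (fun x => f (-x)) T = (fun x => -(x + T)) ⁻¹' excursionSet f T := by
  ext x
  have endpoint : -(x + T) + T = -x := by abel
  simp only [excursionSet, mem_preimage, mem_ofPred_eq, endpoint, max_comm (f (-x))]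
  rw [← (Equiv.neg G).exists_congr_right]
  simp only [Equiv.neg_apply, mem_Ioo, neg_neg, lt_neg (a := x), neg_lt (b := x + T), and_comm]

end Excursion

section AddConstMap

variable {G H : Type*} [AddCommGroup G] [AddCommGroup H] {T : G} {c : H}

/-- The map `x ↦ f (-x)`, whose increment over a period is the opposite of that of `f`. Unlike
`AddConstMap.conjNeg`, it does not negate the values, so that maxima stay maxima. -/
def reflect (f : G →+c[T, c] H) : G →+c[T, -c] H where
  toFun x := f (-x)
  map_add_const' x := by
    rw [neg_add, ← sub_eq_add_neg, AddConstMapClass.map_sub_const, sub_eq_add_neg]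

variable [LinearOrder G] [IsOrderedAddMonoid G] [Archimedean G]
  [LinearOrder H] [IsOrderedAddMonoid H]

theorem excursionSet_nonempty_of_nonneg (f : G →+c[T, c] H) (hT : 0 < T) (hc : 0 ≤ c)
    (hmon : ¬ Monotone f) : (excursionSet f T).Nonempty := by
  obtain ⟨a, b, hab, hlt⟩ : ∃ a b, a ≤ b ∧ f b < f a := by
    simpa only [Monotone, not_forall, not_le, exists_prop] using hmon
  obtain ⟨n, ⟨hleft, hright⟩, -⟩ := existsUnique_add_zsmul_mem_Ioc hT a (b - T)
  rw [sub_add_cancel] at hright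
  have hn : 0 ≤ n := by
    have hlt_zsmul : (-1 : ℤ) • T < n • T := by
      rw [neg_one_zsmul, ← add_lt_add_iff_left a, ← sub_eq_add_neg]
      exact (sub_le_sub_right hab T).trans_lt hleft
    have := (zsmul_lt_zsmul_iff_left hT).1 hlt_zsmul
    omega
  have value_gt : f b < f (a + n • T) := by
    rw [AddConstMapClass.map_add_zsmul]
    exact hlt.trans_le (le_add_of_nonneg_right (zsmul_nonneg hc hn))
  have hne : a + n • T ≠ b := fun h => value_gt.ne (congrArg f h.symm)
  refine ⟨b - T, a + n • T, ⟨hleft, ?_⟩, ?_⟩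
  · rw [sub_add_cancel]
    exact hright.lt_of_ne hne
  · rw [sub_add_cancel, AddConstMapClass.map_sub_const, max_eq_right (sub_le_self _ hc)]
    exact value_gt

theorem excursionSet_nonempty (f : G →+c[T, c] H) (hT : 0 < T)
    (hmon : ¬ Monotone f) (hant : ¬ Antitone f) : (excursionSet f T).Nonempty := by
  rcases le_total 0 c with hc | hc
  · exact excursionSet_nonempty_of_nonneg f hT hc hmon
  · have hmon_reflect : ¬ Monotone (reflect f) := fun h => hant fun x y hxy => by
      simpa only [reflect, AddConstMap.coe_mk, neg_neg] using h (neg_le_neg hxy)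
    have hreflect := excursionSet_nonempty_of_nonneg (reflect f) hT (neg_nonneg.2 hc) hmon_reflect
    exact nonempty_of_nonempty_preimage (excursionSet_comp_neg f T ▸ hreflect)

end AddConstMap

theorem exists_strictMonoOn_Ioo_of_deriv_pos {f : ℝ → ℝ} {z : ℝ}
    (hcont : ContinuousAt (deriv f) z) (hpos : 0 < deriv f z) :
    ∃ δ > 0, StrictMonoOn f (Ioo (z - δ) (z + δ)) := by
  obtain ⟨δ, hδ, hball⟩ := Metric.eventually_nhds_iff_ball.1 (hcont.eventually_const_lt hpos)
  rw [Real.ball_eq_Ioo] at hball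
  refine ⟨δ, hδ, strictMonoOn_of_deriv_pos (convex_Ioo _ _) (fun x hx => ?_) fun x hx => ?_⟩
  · exact (differentiableAt_of_deriv_ne_zero (hball x hx).ne').continuousAt.continuousWithinAt
  · exact hball x (interior_subset hx)

theorem nonempty_interior_setOf_isMaxOn_Iic {f : ℝ → ℝ} {z : ℝ} (hmax : IsMaxOn f (Iic z) z)
    (hcont : ContinuousAt (deriv f) z) (hpos : 0 < deriv f z) :
    (interior {w | IsMaxOn f (Iic w) w}).Nonempty := by
  obtain ⟨δ, hδ, hmono⟩ := exists_strictMonoOn_Ioo_of_deriv_pos hcont hpos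
  have mono_right {x w : ℝ} (hzx : z ≤ x) (hxw : x ≤ w) (hw : w < z + δ) : f x ≤ f w :=
    hmono.monotoneOn ⟨by linarith, by linarith⟩ ⟨by linarith, hw⟩ hxw
  refine (nonempty_Ioo.2 (lt_add_of_pos_right z hδ)).mono (interior_maximal ?_ isOpen_Ioo)
  intro w hw y hyw
  rcases le_total z y with hzy | hyz
  · exact mono_right hzy hyw hw.2
  · exact (hmax hyz).trans (mono_right le_rfl hw.1.le hw.2)

section Real

variable {T c : ℝ}

theorem periodic_sub_slope_mul (f : ℝ →+c[T, c] ℝ) (hT : T ≠ 0) :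
    Function.Periodic (fun x => f x - c / T * x) T := fun x => by
  simp only [AddConstMapClass.map_add_const]
  field_simp
  ring

theorem exists_forall_le_add_slope_mul (f : ℝ →+c[T, c] ℝ) (hT : T ≠ 0) (hf : Continuous f) :
    ∃ z, ∀ y, f y ≤ f z + c / T * (y - z) := by
  obtain ⟨_, ⟨z, rfl⟩, hz⟩ := ((periodic_sub_slope_mul f hT).compact_of_continuous hT
    (by fun_prop)).exists_isGreatest (range_nonempty _)
  refine ⟨z, fun y => ?_⟩
  have := hz (mem_range_self y)
  linarith

theorem deriv_eq_of_forall_le_add_mul {f : ℝ → ℝ} {z m : ℝ} (hf : DifferentiableAt ℝ f z)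
    (h : ∀ y, f y ≤ f z + m * (y - z)) : deriv f z = m := by
  have hmax : IsLocalMax (fun y => f y - m * y) z :=
    Eventually.of_forall fun y => by
      have := h y
      dsimp only
      linarith
  have hderiv := hf.hasDerivAt.sub ((hasDerivAt_id z).const_mul m)
  linarith [hmax.hasDerivAt_eq_zero hderiv]

theorem nonempty_interior_compl_excursionSet_of_pos (f : ℝ →+c[T, c] ℝ) (hT : 0 < T) (hc : 0 < c)
    (hf : ContDiff ℝ 1 f) : (interior (excursionSet f T)ᶜ).Nonempty := by
  obtain ⟨z, hz⟩ := exists_forall_le_add_slope_mul f hT.ne' hf.continuous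
  have slope_pos : 0 < c / T := div_pos hc hT
  have hmax : IsMaxOn f (Iic z) z := fun y hy => (hz y).trans <|
    add_le_of_nonpos_right (mul_nonpos_of_nonneg_of_nonpos slope_pos.le (sub_nonpos.2 hy))
  have hderiv : deriv f z = c / T :=
    deriv_eq_of_forall_le_add_mul (hf.differentiable one_ne_zero z) hz
  have hne := nonempty_interior_setOf_isMaxOn_Iic hmax
    (hf.continuous_deriv le_rfl).continuousAt (hderiv ▸ slope_pos)
  have hpre := (Homeomorph.addRight T).surjective.nonempty_preimage.2 hne
  rw [Homeomorph.preimage_interior] at hpre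
  exact hpre.mono (interior_mono fun x hx => notMem_excursionSet_of_isMaxOn_Iic hx)

theorem nonempty_interior_compl_excursionSet (f : ℝ →+c[T, c] ℝ) (hT : 0 < T) (hc : c ≠ 0)
    (hf : ContDiff ℝ 1 f) : (interior (excursionSet f T)ᶜ).Nonempty := by
  rcases hc.lt_or_gt with hneg | hpos
  · have hreflect : (interior (excursionSet (fun x => f (-x)) T)ᶜ).Nonempty :=
      nonempty_interior_compl_excursionSet_of_pos (reflect f) hT (neg_pos.2 hneg)
        (hf.comp contDiff_neg)
    let e : ℝ ≃ₜ ℝ := (Homeomorph.addRight T).trans (Homeomorph.neg ℝ)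
    have hpre : (e ⁻¹' interior (excursionSet f T)ᶜ).Nonempty := by
      rwa [e.preimage_interior, preimage_compl, ← show _ = e ⁻¹' _ from excursionSet_comp_neg f T]
    exact nonempty_of_nonempty_preimage hpre
  · exact nonempty_interior_compl_excursionSet_of_pos f hT hpos hf

theorem sInf_image_sub_ne_iff_mem_excursionSet {f : ℝ → ℝ} (hf : Continuous f) (hT : 0 ≤ T)
    (x : ℝ) :
    sInf ((fun y => f x - f y) '' Icc x (x + T)) ≠ f x - max (f x) (f (x + T)) ↔
      x ∈ excursionSet f T := by
  have hbdd : BddBelow ((fun y => f x - f y) '' Icc x (x + T)) :=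
    (isCompact_Icc.image (by fun_prop)).bddBelow
  have hx : x ∈ Icc x (x + T) := left_mem_Icc.2 (by linarith)
  have hxT : x + T ∈ Icc x (x + T) := right_mem_Icc.2 (by linarith)
  have hle : sInf ((fun y => f x - f y) '' Icc x (x + T)) ≤ f x - max (f x) (f (x + T)) := by
    rcases max_choice (f x) (f (x + T)) with h | h <;> rw [h]
    · exact csInf_le hbdd (mem_image_of_mem _ hx)
    · exact csInf_le hbdd (mem_image_of_mem _ hxT)
  rw [← hle.lt_iff_ne, csInf_lt_iff hbdd ⟨_, mem_image_of_mem _ hx⟩]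
  simp only [exists_mem_image, sub_lt_sub_iff_left, excursionSet, mem_ofPred_eq]
  refine ⟨fun ⟨y, hy, hlt⟩ => ⟨y, ⟨hy.1.lt_of_ne ?_, hy.2.lt_of_ne ?_⟩, hlt⟩,
    fun ⟨y, hy, hlt⟩ => ⟨y, Ioo_subset_Icc_self hy, hlt⟩⟩
  · rintro rfl
    exact (le_max_left _ _).not_gt hlt
  · rintro rfl
    exact (le_max_right _ _).not_gt hlt

theorem setOf_sInf_image_sub_ne_eq_excursionSet (f : ℝ →+c[T, c] ℝ) (hT : 0 ≤ T)
    (hf : Continuous f) :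
    {x | sInf ((fun y => f x - f y) '' Icc x (x + T)) ≠ min 0 (-c)} = excursionSet f T := by
  ext x
  have hmin : min 0 (-c) = f x - max (f x) (f (x + T)) := by
    rw [AddConstMapClass.map_add_const, ← min_sub_sub_left, sub_self, sub_add_cancel_left]
  rw [mem_ofPred_eq, hmin, sInf_image_sub_ne_iff_mem_excursionSet hf hT]

theorem stmt_6_general (f : ℝ →+c[T, c] ℝ) (hT : 0 < T) (hf : ContDiff ℝ 1 f) (hc : c ≠ 0)
    (hmon : ¬ Monotone f) (hant : ¬ Antitone f) :
    IsOpen {x | sInf ((fun y => f x - f y) '' Icc x (x + T)) ≠ min 0 (-c)} ∧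
    {x | sInf ((fun y => f x - f y) '' Icc x (x + T)) ≠ min 0 (-c)}.Nonempty ∧
    (interior {x | sInf ((fun y => f x - f y) '' Icc x (x + T)) ≠ min 0 (-c)}ᶜ).Nonempty := by
  rw [setOf_sInf_image_sub_ne_eq_excursionSet f hT.le hf.continuous]
  exact ⟨isOpen_excursionSet hf.continuous T, excursionSet_nonempty f hT hmon hant,
    nonempty_interior_compl_excursionSet f hT hc hf⟩

end Real

section Primitive

variable {F : ℝ → ℝ}

theorem contDiff_one_primitive (hF : Continuous F) (a : ℝ) :
    ContDiff ℝ 1 fun x => ∫ t in a..x, F t := by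
  refine contDiff_one_iff_deriv.2 ⟨fun x => ?_, ?_⟩
  · exact (hF.integral_hasStrictDerivAt a x).hasDerivAt.differentiableAt
  · rwa [funext (hF.deriv_integral F a)]

/-- The primitive from `0` of a continuous periodic function, as a map with constant increment
over a period. -/
noncomputable def periodicPrimitive {T : ℝ} (hF : Continuous F) (hper : Function.Periodic F T) :
    ℝ →+c[T, ∫ t in (0 : ℝ)..T, F t] ℝ where
  toFun x := ∫ t in (0 : ℝ)..x, F t
  map_add_const' x := by
    simpa only [zero_add] using
      hper.intervalIntegral_add_eq_add 0 x fun _ _ => hF.intervalIntegrable _ _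

end Primitive

/-- If `S(1) ≠ 0` and `S` is not monotone, then
`U = {x : Φ(x) ≠ min{0, −S(1)}}` is open and nonempty, and
`ℝ \ U` has nonempty interior. -/
theorem stmt_6
    (F : ℝ → ℝ) (hF : Continuous F) (hFper : ∀ x, F (x + 1) = F x)
    (S : ℝ → ℝ) (hS : ∀ x, S x = ∫ t in (0:ℝ)..x, F t)
    (Φ : ℝ → ℝ) (hΦ : ∀ x, Φ x = sInf ((fun y => S x - S y) '' Icc x (x + 1)))
    (hS1 : S 1 ≠ 0) (hmon : ¬ Monotone S) (hant : ¬ Antitone S) :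
    IsOpen {x : ℝ | Φ x ≠ min 0 (-S 1)} ∧
    {x : ℝ | Φ x ≠ min 0 (-S 1)}.Nonempty ∧
    (interior {x : ℝ | Φ x ≠ min 0 (-S 1)}ᶜ).Nonempty := by
  obtain rfl := funext hΦ
  obtain rfl := funext hS
  exact stmt_6_general (periodicPrimitive hF hFper) one_pos (contDiff_one_primitive hF 0)
    hS1 hmon hant
end

section
/- Assume S(1) ≠ 0 and S is not monotone, and set U = {x ∈ ℝ : Φ(x) ≠ min{0, −S(1)}}. Then on each connected component of U the function Φ equals S up to an additive constant: if (a,b) is a connected component of U, then Φ(x) = S(x) − S(a) + Φ(a) for all x ∈ (a,b). -/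
open Set Filter Topology

/-!
Write `Φ x = S x - M x`, where `M x` is the maximum of `S` over the
window `[x, x + 1]`. As `S (x + 1) = S x + S 1`, the condition `Φ x ≠ min 0 (-S 1)` says exactly
that `M x ≠ max (S x) (S (x + 1))`, i.e. that the maximum is attained only in the interior of the
window. Such a maximum is not affected by a small displacement of the window, so `M` is locally
constant on `U`, hence constant on each interval contained in `U` and, by continuity, on the closure
of that interval.
-/

section windowSup

variable {α : Type*} [ConditionallyCompleteLinearOrder α]

/-- The supremum of `f` over the window `[x, x + T]`, as a function of the position `x` of the
window. It is meaningful for `0 ≤ T` and `f` bounded above on the window. -/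
noncomputable def windowSup (f : ℝ → α) (T x : ℝ) : α :=
  sSup (f '' Icc x (x + T))

theorem windowSup_eq_sSup_image_add (f : ℝ → α) (T x : ℝ) :
    windowSup f T x = sSup ((fun t ↦ f (x + t)) '' Icc 0 T) := by
  rw [windowSup, ← image_image f (x + ·), image_const_add_Icc, add_zero]

variable [TopologicalSpace α] [OrderTopology α] {f : ℝ → α} {T a b x : ℝ}

theorem continuous_windowSup (hf : Continuous f) : Continuous (windowSup f T) := by
  rw [funext (windowSup_eq_sSup_image_add f T)]
  exact isCompact_Icc.continuous_sSup (by fun_prop)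

theorem isGreatest_windowSup (hf : Continuous f) (hT : 0 ≤ T) (x : ℝ) :
    IsGreatest (f '' Icc x (x + T)) (windowSup f T x) :=
  (isCompact_Icc.image hf).isGreatest_sSup
    ((nonempty_Icc.2 (le_add_of_nonneg_right hT)).image f)

theorem le_windowSup (hf : Continuous f) {y : ℝ} (hy : y ∈ Icc x (x + T)) :
    f y ≤ windowSup f T x :=
  le_csSup (isCompact_Icc.image hf).bddAbove (mem_image_of_mem f hy)

theorem max_lt_windowSup (hf : Continuous f) (hT : 0 ≤ T)
    (hne : windowSup f T x ≠ max (f x) (f (x + T))) :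
    max (f x) (f (x + T)) < windowSup f T x :=
  lt_of_le_of_ne (max_le (le_windowSup hf (by simpa)) (le_windowSup hf (by simpa))) hne.symm

theorem eventually_windowSup_le (hf : Continuous f) (hT : 0 ≤ T)
    (hlt : max (f x) (f (x + T)) < windowSup f T x) :
    ∀ᶠ x' in 𝓝 x, windowSup f T x' ≤ windowSup f T x := by
  have le_near_window : ∀ y ∈ Icc x (x + T), ∀ᶠ z in 𝓝 y, f z ≤ windowSup f T x := by
    intro y hy
    rcases eq_endpoints_or_mem_Ioo_of_mem_Icc hy with rfl | rfl | hy_Ioo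
    · exact (hf.continuousAt.eventually_lt_const (max_lt_iff.1 hlt).1).mono fun _ ↦ le_of_lt
    · exact (hf.continuousAt.eventually_lt_const (max_lt_iff.1 hlt).2).mono fun _ ↦ le_of_lt
    · exact mem_of_superset (Icc_mem_nhds hy_Ioo.1 hy_Ioo.2) fun z hz ↦ le_windowSup hf hz
  have le_shifted : ∀ᶠ x' in 𝓝 x, ∀ t ∈ Icc 0 T, f (x' + t) ≤ windowSup f T x :=
    isCompact_Icc.eventually_forall_of_forall_eventually fun t ht ↦
      (continuous_add.tendsto (x, t)).eventually
        (le_near_window (x + t) ⟨by linarith [ht.1], by linarith [ht.2]⟩)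
  filter_upwards [le_shifted] with x' hx'
  rw [windowSup_eq_sSup_image_add f T x']
  exact csSup_le ((nonempty_Icc.2 hT).image _) (forall_mem_image.2 hx')

theorem eventually_le_windowSup (hf : Continuous f) (hT : 0 ≤ T)
    (hlt : max (f x) (f (x + T)) < windowSup f T x) :
    ∀ᶠ x' in 𝓝 x, windowSup f T x ≤ windowSup f T x' := by
  obtain ⟨y, hy, hy_max⟩ := (isGreatest_windowSup hf hT x).1
  rw [← hy_max, max_lt_iff] at hlt
  have left_lt : x < y := hy.1.lt_of_ne (by rintro rfl; exact hlt.1.false)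
  have lt_right : y - T < x := by
    have : y < x + T := hy.2.lt_of_ne (by rintro rfl; exact hlt.2.false)
    linarith
  filter_upwards [Ioo_mem_nhds lt_right left_lt] with x' hx'
  exact hy_max ▸ le_windowSup hf ⟨hx'.2.le, by linarith [hx'.1]⟩

theorem eventually_windowSup_eq (hf : Continuous f) (hT : 0 ≤ T)
    (hne : windowSup f T x ≠ max (f x) (f (x + T))) :
    ∀ᶠ x' in 𝓝 x, windowSup f T x = windowSup f T x' := by
  have hlt := max_lt_windowSup hf hT hne
  filter_upwards [eventually_le_windowSup hf hT hlt, eventually_windowSup_le hf hT hlt]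
    with x' h_le h_ge using h_le.antisymm h_ge

theorem windowSup_eqOn_Icc (hf : Continuous f) (hT : 0 ≤ T)
    (hne : ∀ x ∈ Ioo a b, windowSup f T x ≠ max (f x) (f (x + T))) :
    EqOn (windowSup f T) (fun _ ↦ windowSup f T a) (Icc a b) := by
  intro x hx
  rcases (hx.1.trans hx.2).eq_or_lt with rfl | hab
  · rw [le_antisymm hx.2 hx.1]
  have locally_const : ∀ y ∈ Ioo a b, ∀ᶠ z in 𝓝[Ioo a b] y, windowSup f T y = windowSup f T z :=
    fun y hy ↦ nhdsWithin_le_nhds (eventually_windowSup_eq hf hT (hne y hy))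
  obtain ⟨c, hc⟩ := nonempty_Ioo.2 hab
  have const_Ioo : EqOn (windowSup f T) (fun _ ↦ windowSup f T c) (Ioo a b) := fun y hy ↦
    isPreconnected_Ioo.induction₂ (fun y z ↦ windowSup f T y = windowSup f T z) locally_const
      (fun _ _ _ _ _ _ ↦ Eq.trans) (fun _ _ _ _ ↦ Eq.symm) hy hc
  have const_Icc := const_Ioo.closure (continuous_windowSup hf) continuous_const
  rw [closure_Ioo hab.ne] at const_Icc
  exact (const_Icc hx).trans (const_Icc (left_mem_Icc.2 hab.le)).symm

end windowSup

theorem sInf_image_const_sub_eq_sub_windowSup {f : ℝ → ℝ} {T : ℝ} (hf : Continuous f)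
    (hT : 0 ≤ T) (c x : ℝ) :
    sInf ((fun y ↦ c - f y) '' Icc x (x + T)) = c - windowSup f T x := by
  have antitone_const_sub : Antitone fun s : ℝ ↦ c - s := fun _ _ h ↦ sub_le_sub_left h c
  rw [← image_image (fun s ↦ c - s)]
  exact (antitone_const_sub.map_isGreatest (isGreatest_windowSup hf hT x)).csInf_eq

theorem stmt_7_general {S Φ : ℝ → ℝ} {T : ℝ} (hS : Continuous S) (hT : 0 ≤ T)
    (hΦ : ∀ x, Φ x = sInf ((fun y ↦ S x - S y) '' Icc x (x + T))) {a b : ℝ}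
    (hU : Ioo a b ⊆ {x | Φ x ≠ min 0 (S x - S (x + T))}) :
    ∀ x ∈ Icc a b, Φ x = S x - S a + Φ a := by
  have Φ_eq (x : ℝ) : Φ x = S x - windowSup S T x := by
    rw [hΦ, sInf_image_const_sub_eq_sub_windowSup hS hT]
  have windowSup_ne : ∀ x ∈ Ioo a b, windowSup S T x ≠ max (S x) (S (x + T)) := by
    intro x hx h_eq
    apply hU hx
    rw [Φ_eq, h_eq, ← min_sub_sub_left, sub_self]
  intro x hx
  rw [Φ_eq x, Φ_eq a, windowSup_eqOn_Icc hS hT windowSup_ne hx]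
  ring

/-- Assume `S(1) ≠ 0` and `S` is not monotone, and let
`U = {x : Φ(x) ≠ min{0, −S(1)}}`. On each connected component `(a,b)` of the
open set `U` (characterized by `(a,b) ⊆ U` with endpoints `a, b ∉ U`),
`Φ` equals `S` up to an additive constant:
`Φ(x) = S(x) − S(a) + Φ(a)` for all `x ∈ (a,b)`. -/
theorem stmt_7
    (F : ℝ → ℝ) (hF : Continuous F) (hFper : ∀ x, F (x + 1) = F x)
    (S : ℝ → ℝ) (hS : ∀ x, S x = ∫ t in (0:ℝ)..x, F t)
    (Φ : ℝ → ℝ) (hΦ : ∀ x, Φ x = sInf ((fun y => S x - S y) '' Icc x (x + 1)))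
    (hS1 : S 1 ≠ 0) (hmon : ¬ Monotone S) (hant : ¬ Antitone S) :
    ∀ a b : ℝ, a < b →
      Ioo a b ⊆ {x : ℝ | Φ x ≠ min 0 (-S 1)} →
      a ∉ {x : ℝ | Φ x ≠ min 0 (-S 1)} →
      b ∉ {x : ℝ | Φ x ≠ min 0 (-S 1)} →
      ∀ x ∈ Ioo a b, Φ x = S x - S a + Φ a := by
  intro a b _ hU _ _ x hx
  have S_continuous : Continuous S :=
    funext hS ▸ intervalIntegral.continuous_primitive hF.intervalIntegrable 0
  have S_add_one (x : ℝ) : S (x + 1) = S x + S 1 := by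
    simpa only [hS, zero_add] using
      Function.Periodic.intervalIntegral_add_eq_add hFper 0 x hF.intervalIntegrable
  refine stmt_7_general S_continuous zero_le_one hΦ ?_ x (Ioo_subset_Icc_self hx)
  simpa only [S_add_one, sub_add_cancel_left] using hU
end

section
/- Let H : 𝕋 × ℝ → ℝ be a Hamiltonian such that (A) p ↦ H(x,p) is convex for every x ∈ 𝕋, and (B) H(x,0) = H(x,F(x)) = 0 for every x ∈ 𝕋. Then the 1-periodic function Φ is a viscosity solution of the stationary Hamilton–Jacobi equation H(x, ∇Φ(x)) = 0 on 𝕋; that is, for every x, H(x,p) ≥ 0 for all p ∈ D⁻Φ(x) and H(x,p) ≤ 0 for all p ∈ D⁺Φ(x). -/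
open Set Filter Topology

/-- The superdifferential `D⁺φ(x)`. -/
def Dplus (φ : ℝ → ℝ) (x : ℝ) : Set ℝ :=
  {p | Filter.limsup (fun y => (φ y - φ x - p * (y - x)) / |y - x|) (nhdsWithin x {x}ᶜ) ≤ 0}

/-- The subdifferential `D⁻φ(x)`. -/
def Dminus (φ : ℝ → ℝ) (x : ℝ) : Set ℝ :=
  {p | 0 ≤ Filter.liminf (fun y => (φ y - φ x - p * (y - x)) / |y - x|) (nhdsWithin x {x}ᶜ)}

/-!
Write `Φ x = S x - S z` with `z ∈ [x, x + T]` a maximiser of `S`. If `z` is interior then `Φ` is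
touched from above at `x` by `S - S z`; if `z` is an endpoint then `x` is a global maximum of `Φ`.
Hence every subgradient of `Φ` at `x` is `F x` or `0`, where `H x` vanishes.

For `a ≤ b`, following the maximiser while the window slides from `a` to `b` bounds `Φ b - Φ a`
above by an increment of `S` over some `[a, z] ⊆ [a, b]`, and below by one over some
`[z, b] ⊆ [a, b]`. Hence every supergradient at `x` lies between `0` and `F x`, where `H x ≤ 0` by
convexity.
-/

section Differentials

open Asymptotics

lemma isBigO_sub_of_lipschitzWith {E E' : Type*} [SeminormedAddCommGroup E]
    [SeminormedAddCommGroup E'] {f : E → E'} {K : NNReal} (hf : LipschitzWith K f) (x : E)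
    (l : Filter E) : (f · - f x) =O[l] (· - x) :=
  .of_bound K (.of_forall fun y => hf.norm_sub_le y x)

variable {φ g : ℝ → ℝ} {x p a b g' : ℝ}

/- Real `limsup` and `liminf` take junk values on unbounded functions, so membership in `Dplus` or
`Dminus` is informative only once the difference quotients are known to be bounded. -/
lemma isBoundedUnder_abs_sub_affine_div (hφ : (φ · - φ x) =O[𝓝[≠] x] (· - x)) (p : ℝ) :
    IsBoundedUnder (· ≤ ·) (𝓝[≠] x) fun y => |(φ y - φ x - p * (y - x)) / (|y - x|)| :=
  div_isBoundedUnder_of_isBigO (hφ.sub ((isBigO_refl _ _).const_mul_left p)).norm_right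

lemma eventually_lt_of_mem_Dplus (hφ : (φ · - φ x) =O[𝓝[≠] x] (· - x)) (hp : p ∈ Dplus φ x)
    {ε : ℝ} (hε : 0 < ε) : ∀ᶠ y in 𝓝[≠] x, φ y - φ x - p * (y - x) < ε * |y - x| := by
  have hbdd := (isBoundedUnder_le_abs.1 (isBoundedUnder_abs_sub_affine_div hφ p)).1
  filter_upwards [eventually_lt_of_limsup_lt (hp.trans_lt hε) hbdd, self_mem_nhdsWithin]
    with y hy hyx
  exact (div_lt_iff₀ (abs_pos.2 (sub_ne_zero.2 hyx))).1 hy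

lemma eventually_lt_of_mem_Dminus (hφ : (φ · - φ x) =O[𝓝[≠] x] (· - x)) (hp : p ∈ Dminus φ x)
    {ε : ℝ} (hε : 0 < ε) : ∀ᶠ y in 𝓝[≠] x, -ε * |y - x| < φ y - φ x - p * (y - x) := by
  have hbdd := (isBoundedUnder_le_abs.1 (isBoundedUnder_abs_sub_affine_div hφ p)).2
  filter_upwards [eventually_lt_of_lt_liminf ((neg_neg_of_pos hε).trans_le hp) hbdd,
    self_mem_nhdsWithin] with y hy hyx
  exact (lt_div_iff₀ (abs_pos.2 (sub_ne_zero.2 hyx))).1 hy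

lemma le_of_eventually_nhdsGT_mul_sub_le (h : ∀ᶠ y in 𝓝[>] x, a * (y - x) ≤ b * (y - x)) :
    a ≤ b := by
  obtain ⟨y, hy, hxy⟩ := (h.and self_mem_nhdsWithin).exists
  exact le_of_mul_le_mul_right hy (sub_pos.2 hxy)

lemma le_of_eventually_nhdsLT_mul_sub_le (h : ∀ᶠ y in 𝓝[<] x, a * (x - y) ≤ b * (x - y)) :
    a ≤ b := by
  obtain ⟨y, hy, hyx⟩ := (h.and self_mem_nhdsWithin).exists
  exact le_of_mul_le_mul_right hy (sub_pos.2 hyx)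

lemma le_of_mem_Dplus_of_eventually_nhdsGT (hφ : (φ · - φ x) =O[𝓝[≠] x] (· - x))
    (hp : p ∈ Dplus φ x) (ha : ∀ᶠ y in 𝓝[>] x, a * (y - x) ≤ φ y - φ x) : a ≤ p := by
  refine le_of_forall_pos_le_add fun ε hε => le_of_eventually_nhdsGT_mul_sub_le (x := x) ?_
  filter_upwards [ha, (eventually_lt_of_mem_Dplus hφ hp hε).filter_mono (nhdsGT_le_nhdsNE x),
    self_mem_nhdsWithin] with y hay hpy hxy
  rw [abs_of_pos (sub_pos.2 hxy)] at hpy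
  linarith

lemma le_of_mem_Dplus_of_eventually_nhdsLT (hφ : (φ · - φ x) =O[𝓝[≠] x] (· - x))
    (hp : p ∈ Dplus φ x) (hb : ∀ᶠ y in 𝓝[<] x, φ x - φ y ≤ b * (x - y)) : p ≤ b := by
  refine le_of_forall_pos_le_add fun ε hε => le_of_eventually_nhdsLT_mul_sub_le (x := x) ?_
  filter_upwards [hb, (eventually_lt_of_mem_Dplus hφ hp hε).filter_mono (nhdsLT_le_nhdsNE x),
    self_mem_nhdsWithin] with y hby hpy hyx
  rw [abs_of_neg (sub_neg.2 hyx)] at hpy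
  linarith

lemma eq_of_mem_Dminus_of_isLocalMax_sub (hφ : (φ · - φ x) =O[𝓝[≠] x] (· - x))
    (hp : p ∈ Dminus φ x) (hg : HasDerivAt g g' x) (hmax : IsLocalMax (φ - g) x) : p = g' := by
  have slope_close {ε : ℝ} (hε : 0 < ε) :
      ∀ᶠ y in 𝓝[≠] x, (p - g') * (y - x) ≤ ε * |y - x| := by
    filter_upwards [eventually_lt_of_mem_Dminus hφ hp (half_pos hε),
      nhdsWithin_le_nhds (hg.isLittleO.bound (half_pos hε)), nhdsWithin_le_nhds hmax]
      with y hpy hgy hφg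
    simp only [Real.norm_eq_abs, smul_eq_mul, Pi.sub_apply] at hgy hφg
    linarith [le_abs_self (g y - g x - (y - x) * g')]
  apply le_antisymm
  · refine le_of_forall_pos_le_add fun ε hε => le_of_eventually_nhdsGT_mul_sub_le (x := x) ?_
    filter_upwards [(slope_close hε).filter_mono (nhdsGT_le_nhdsNE x), self_mem_nhdsWithin]
      with y hy hxy
    rw [abs_of_pos (sub_pos.2 hxy)] at hy
    linarith
  · refine le_of_forall_pos_le_add fun ε hε => le_of_eventually_nhdsLT_mul_sub_le (x := x) ?_
    filter_upwards [(slope_close hε).filter_mono (nhdsLT_le_nhdsNE x), self_mem_nhdsWithin]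
      with y hy hyx
    rw [abs_of_neg (sub_neg.2 hyx)] at hy
    linarith

end Differentials

lemma eventually_forall_uIcc_abs_sub_le_of_hasStrictDerivAt {S : ℝ → ℝ} {s x ε : ℝ}
    (hS : HasStrictDerivAt S s x) (hε : 0 < ε) :
    ∀ᶠ y in 𝓝 x, ∀ z ∈ uIcc x y, |S y - S z - (y - z) * s| ≤ ε * |y - z| := by
  have hclose := hS.isLittleO.bound hε
  rw [nhds_prod_eq, eventually_prod_self_iff'] at hclose
  obtain ⟨t, ht, hclose⟩ := hclose
  obtain ⟨δ, hδ, hball⟩ := Metric.mem_nhds_iff.1 ht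
  filter_upwards [Metric.ball_mem_nhds x hδ] with y hy z hz
  have hz : z ∈ Metric.ball x δ :=
    (convex_ball x δ).ordConnected.uIcc_subset (Metric.mem_ball_self hδ) hy hz
  simpa using hclose y (hball hy) z (hball hz)

/-- The least drop `S x - S y` from `x` to a point `y` of the forward window `[x, x + T]`: the
function `Φ` of the theorem, for an arbitrary window length `T` and potential `S`. -/
noncomputable def minDrop (T : ℝ) (S : ℝ → ℝ) (x : ℝ) : ℝ :=
  sInf ((fun y => S x - S y) '' Icc x (x + T))

section MinDrop

variable {S : ℝ → ℝ} {T c x a b s p : ℝ}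

lemma minDrop_le (hS : Continuous S) {y : ℝ} (hy : y ∈ Icc x (x + T)) :
    minDrop T S x ≤ S x - S y :=
  csInf_le (isCompact_Icc.bddBelow_image (by fun_prop)) (mem_image_of_mem _ hy)

lemma exists_minDrop_eq (hS : Continuous S) (hT : 0 ≤ T) (x : ℝ) :
    ∃ z ∈ Icc x (x + T), minDrop T S x = S x - S z :=
  isCompact_Icc.exists_sInf_image_eq (nonempty_Icc.2 (le_add_of_nonneg_right hT)) (by fun_prop)

lemma periodic_minDrop (hSc : ∀ x, S (x + T) = S x + c) : Function.Periodic (minDrop T S) T := by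
  intro x
  simp only [minDrop, ← image_add_const_Icc, image_image, hSc, add_sub_add_right_eq_sub]

lemma exists_minDrop_sub_le (hS : Continuous S) (hT : 0 ≤ T) (hab : a ≤ b) :
    ∃ z ∈ Icc a b, minDrop T S b - minDrop T S a ≤ S z - S a := by
  obtain ⟨z, hz, hza⟩ := exists_minDrop_eq hS hT a
  rcases le_total b z with hbz | hzb
  · have := minDrop_le hS (T := T) ⟨hbz, by linarith [hz.2]⟩
    exact ⟨b, right_mem_Icc.2 hab, by linarith⟩
  · have := minDrop_le hS (left_mem_Icc.2 (le_add_of_nonneg_right hT : b ≤ b + T))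
    exact ⟨z, ⟨hz.1, hzb⟩, by linarith⟩

lemma exists_le_minDrop_sub (hS : Continuous S) (hT : 0 ≤ T) (hSc : ∀ x, S (x + T) = S x + c)
    (hab : a ≤ b) : ∃ z ∈ Icc a b, S b - S z ≤ minDrop T S b - minDrop T S a := by
  obtain ⟨z, hz, hzb⟩ := exists_minDrop_eq hS hT b
  rcases le_total z (a + T) with hza | haz
  · have := minDrop_le hS (T := T) ⟨hab.trans hz.1, hza⟩
    exact ⟨a, left_mem_Icc.2 hab, by linarith⟩
  · have := minDrop_le hS (right_mem_Icc.2 (le_add_of_nonneg_right hT : a ≤ a + T))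
    have hSz := hSc (z - T)
    rw [sub_add_cancel] at hSz
    exact ⟨z - T, ⟨by linarith, by linarith [hz.2]⟩, by linarith [hSc a]⟩

lemma lipschitzWith_minDrop {K : NNReal} (hS : LipschitzWith K S) (hT : 0 ≤ T)
    (hSc : ∀ x, S (x + T) = S x + c) : LipschitzWith K (minDrop T S) := by
  have hS_le {u v : ℝ} (huv : u ≤ v) : |S v - S u| ≤ K * (v - u) := by
    simpa only [Real.dist_eq, abs_of_nonneg (sub_nonneg.2 huv)] using hS.dist_le_mul v u
  refine LipschitzWith.of_le_add_mul K fun u v => ?_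
  rcases le_total v u with hvu | huv
  · obtain ⟨z, hz, hle⟩ := exists_minDrop_sub_le hS.continuous hT hvu
    rw [Real.dist_eq, abs_of_nonneg (sub_nonneg.2 hvu)]
    have : (K : ℝ) * (z - v) ≤ K * (u - v) := by gcongr; exact hz.2
    linarith [(abs_le.1 (hS_le hz.1)).2]
  · obtain ⟨z, hz, hle⟩ := exists_le_minDrop_sub hS.continuous hT hSc huv
    rw [Real.dist_eq, abs_of_nonpos (sub_nonpos.2 huv), neg_sub]
    have : (K : ℝ) * (v - z) ≤ K * (v - u) := by gcongr; exact hz.1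
    linarith [(abs_le.1 (hS_le hz.2)).1]

lemma eventually_nhdsGT_le_minDrop_sub (hS : Continuous S) (hT : 0 ≤ T)
    (hSc : ∀ x, S (x + T) = S x + c) (hs : HasStrictDerivAt S s x) {ε : ℝ} (hε : 0 < ε) :
    ∀ᶠ y in 𝓝[>] x, (min 0 s - ε) * (y - x) ≤ minDrop T S y - minDrop T S x := by
  filter_upwards [self_mem_nhdsWithin,
    nhdsWithin_le_nhds (eventually_forall_uIcc_abs_sub_le_of_hasStrictDerivAt hs hε)]
    with y (hxy : x < y) hclose
  obtain ⟨z, hz, hle⟩ := exists_le_minDrop_sub hS hT hSc hxy.le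
  have hSz := (abs_le.1 (hclose z (Icc_subset_uIcc hz))).1
  rw [abs_of_nonneg (sub_nonneg.2 hz.2)] at hSz
  calc (min 0 s - ε) * (y - x) ≤ (min 0 s - ε) * (y - z) :=
        mul_le_mul_of_nonpos_left (by linarith [hz.1]) (by linarith [min_le_left 0 s])
    _ ≤ (s - ε) * (y - z) :=
        mul_le_mul_of_nonneg_right (by linarith [min_le_right 0 s]) (sub_nonneg.2 hz.2)
    _ ≤ S y - S z := by linarith
    _ ≤ _ := hle

lemma eventually_nhdsLT_minDrop_sub_le (hS : Continuous S) (hT : 0 ≤ T)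
    (hs : HasStrictDerivAt S s x) {ε : ℝ} (hε : 0 < ε) :
    ∀ᶠ y in 𝓝[<] x, minDrop T S x - minDrop T S y ≤ (max 0 s + ε) * (x - y) := by
  filter_upwards [self_mem_nhdsWithin,
    nhdsWithin_le_nhds (eventually_forall_uIcc_abs_sub_le_of_hasStrictDerivAt hs hε)]
    with y (hyx : y < x) hclose
  obtain ⟨z, hz, hle⟩ := exists_minDrop_sub_le hS hT hyx.le
  have hSz := (abs_le.1 (hclose z (Icc_subset_uIcc' hz))).1
  rw [abs_of_nonpos (sub_nonpos.2 hz.1)] at hSz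
  calc minDrop T S x - minDrop T S y ≤ S z - S y := hle
    _ ≤ (s + ε) * (z - y) := by linarith
    _ ≤ (max 0 s + ε) * (z - y) :=
        mul_le_mul_of_nonneg_right (by linarith [le_max_right 0 s]) (sub_nonneg.2 hz.1)
    _ ≤ (max 0 s + ε) * (x - y) :=
        mul_le_mul_of_nonneg_left (by linarith [hz.2]) (by positivity)

lemma mem_uIcc_of_mem_Dplus_minDrop {K : NNReal} (hS : LipschitzWith K S) (hT : 0 ≤ T)
    (hSc : ∀ x, S (x + T) = S x + c) (hs : HasStrictDerivAt S s x)
    (hp : p ∈ Dplus (minDrop T S) x) : p ∈ uIcc 0 s := by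
  have hO := isBigO_sub_of_lipschitzWith (lipschitzWith_minDrop hS hT hSc) x (𝓝[≠] x)
  constructor
  · refine le_of_forall_pos_le_add fun ε hε => sub_le_iff_le_add.1 ?_
    exact le_of_mem_Dplus_of_eventually_nhdsGT hO hp
      (eventually_nhdsGT_le_minDrop_sub hS.continuous hT hSc hs hε)
  · refine le_of_forall_pos_le_add fun ε hε => ?_
    exact le_of_mem_Dplus_of_eventually_nhdsLT hO hp
      (eventually_nhdsLT_minDrop_sub_le hS.continuous hT hs hε)

lemma eq_zero_or_eq_of_mem_Dminus_minDrop {K : NNReal} (hS : LipschitzWith K S) (hT : 0 ≤ T)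
    (hSc : ∀ x, S (x + T) = S x + c) (hs : HasDerivAt S s x)
    (hp : p ∈ Dminus (minDrop T S) x) : p = 0 ∨ p = s := by
  have hO := isBigO_sub_of_lipschitzWith (lipschitzWith_minDrop hS hT hSc) x (𝓝[≠] x)
  have eq_zero_of_max (hmax : ∀ y, minDrop T S y ≤ minDrop T S x) : p = 0 :=
    eq_of_mem_Dminus_of_isLocalMax_sub hO hp (hasDerivAt_const x 0)
      (.of_forall fun y => by simpa using hmax y)
  obtain ⟨z, hz, hzx⟩ := exists_minDrop_eq hS.continuous hT x
  rcases hz.1.eq_or_lt with rfl | hxz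
  · refine .inl (eq_zero_of_max fun y => ?_)
    linarith [minDrop_le hS.continuous (left_mem_Icc.2 (le_add_of_nonneg_right hT : y ≤ y + T))]
  rcases hz.2.eq_or_lt with rfl | hzT
  · refine .inl (eq_zero_of_max fun y => ?_)
    linarith [minDrop_le hS.continuous (right_mem_Icc.2 (le_add_of_nonneg_right hT : y ≤ y + T)),
      hSc x, hSc y]
  · refine .inr (eq_of_mem_Dminus_of_isLocalMax_sub hO hp hs ?_)
    filter_upwards [Ioo_mem_nhds (sub_lt_iff_lt_add.2 hzT) hxz] with y hy
    have := minDrop_le hS.continuous (T := T) ⟨hy.2.le, (sub_lt_iff_lt_add.1 hy.1).le⟩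
    simp only [Pi.sub_apply]
    linarith

end MinDrop

section Antiderivative

variable {F S : ℝ → ℝ} {T : ℝ}

lemma add_period_of_hasDerivAt (hFper : Function.Periodic F T) (hS : ∀ x, HasDerivAt S (F x) x)
    (x : ℝ) : S (x + T) = S x + (S T - S 0) := by
  have hderiv (y : ℝ) : HasDerivAt (fun y => S (y + T) - S y) 0 y := by
    simpa only [hFper y, sub_self] using ((hS (y + T)).comp_add_const y T).fun_sub (hS y)
  have := is_const_of_deriv_eq_zero (fun y => (hderiv y).differentiableAt)
    (fun y => (hderiv y).deriv) x 0
  simp only [zero_add] at this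
  linarith

lemma exists_lipschitzWith_of_hasDerivAt_periodic (hF : Continuous F)
    (hFper : Function.Periodic F T) (hT : T ≠ 0) (hS : ∀ x, HasDerivAt S (F x) x) :
    ∃ K, LipschitzWith K S := by
  obtain ⟨K, -, hK⟩ := (hFper.isBounded_of_continuous hT hF).exists_pos_norm_le
  refine ⟨K.toNNReal, lipschitzWith_of_nnnorm_deriv_le (fun x => (hS x).differentiableAt) ?_⟩
  intro x
  rw [(hS x).deriv, ← norm_toNNReal]
  exact Real.toNNReal_le_toNNReal (hK _ (mem_range_self x))

end Antiderivative

theorem stmt_10_general {T : ℝ} (hT : 0 < T) {F S : ℝ → ℝ} (hF : Continuous F)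
    (hFper : Function.Periodic F T) (hS : ∀ x, HasDerivAt S (F x) x) {H : ℝ → ℝ → ℝ}
    (hH : ∀ x, QuasiconvexOn ℝ univ (H x)) (hH0 : ∀ x, H x 0 = 0) (hHF : ∀ x, H x (F x) = 0) :
    Continuous (minDrop T S) ∧ Function.Periodic (minDrop T S) T ∧
    (∀ x, ∀ p ∈ Dminus (minDrop T S) x, 0 ≤ H x p) ∧
    (∀ x, ∀ p ∈ Dplus (minDrop T S) x, H x p ≤ 0) := by
  have hSc := add_period_of_hasDerivAt hFper hS
  obtain ⟨K, hK⟩ := exists_lipschitzWith_of_hasDerivAt_periodic hF hFper hT.ne' hS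
  refine ⟨(lipschitzWith_minDrop hK hT.le hSc).continuous, periodic_minDrop hSc,
    fun x p hp => ?_, fun x p hp => ?_⟩
  · rcases eq_zero_or_eq_of_mem_Dminus_minDrop hK hT.le hSc (hS x) hp with rfl | rfl
    · exact (hH0 x).ge
    · exact (hHF x).ge
  · have hstrict : HasStrictDerivAt S (F x) x :=
      hasStrictDerivAt_of_hasDerivAt_of_continuousAt (.of_forall hS) hF.continuousAt
    have hseg : p ∈ segment ℝ 0 (F x) :=
      segment_eq_uIcc 0 (F x) ▸ mem_uIcc_of_mem_Dplus_minDrop hK hT.le hSc hstrict hp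
    exact ((hH x 0).segment_subset ⟨mem_univ _, (hH0 x).le⟩ ⟨mem_univ _, (hHF x).le⟩ hseg).2

/-- For any Hamiltonian `H` on `𝕋 × ℝ` (encoded as a function on
`ℝ × ℝ`, 1-periodic in the first variable) with `p ↦ H(x,p)` convex and
`H(x,0) = H(x,F(x)) = 0`, the continuous 1-periodic function `Φ` is a viscosity
solution of `H(x, ∇Φ(x)) = 0` on `𝕋`. -/
theorem stmt_10
    (F : ℝ → ℝ) (hF : Continuous F) (hFper : ∀ x, F (x + 1) = F x)
    (S : ℝ → ℝ) (hS : ∀ x, S x = ∫ t in (0:ℝ)..x, F t)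
    (Φ : ℝ → ℝ) (hΦ : ∀ x, Φ x = sInf ((fun y => S x - S y) '' Icc x (x + 1)))
    (H : ℝ → ℝ → ℝ) (hHper : ∀ x p, H (x + 1) p = H x p)
    (hHconv : ∀ x, ConvexOn ℝ Set.univ (H x))
    (hH0 : ∀ x, H x 0 = 0) (hHF : ∀ x, H x (F x) = 0) :
    Continuous Φ ∧ (∀ x, Φ (x + 1) = Φ x) ∧
    (∀ x : ℝ, ∀ p ∈ Dminus Φ x, 0 ≤ H x p) ∧
    (∀ x : ℝ, ∀ p ∈ Dplus Φ x, H x p ≤ 0) := by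
  obtain rfl : Φ = minDrop 1 S := funext hΦ
  obtain rfl : S = fun x => ∫ t in (0:ℝ)..x, F t := funext hS
  exact stmt_10_general one_pos hF hFper (fun x => (hF.integral_hasStrictDerivAt 0 x).hasDerivAt)
    (fun x => (hHconv x).quasiconvexOn) hH0 hHF
end

section
/- Let b ∈ ℝ be such that S(b+1) = max_{y∈[b,b+1]} S(y). Then for every x ∈ [b, b+1], Φ(x) = S(x) − S(1) − max_{y∈[b,x]} S(y). -/
open Set Filter Topology

/-!
Since `S (y + T) = S y + c`, the values of `S` on `[b + T, x + T]` are those on `[b, x]` shifted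
by `c`. As `S` is maximal over `[b, b + T]` at the endpoint `b + T`, the part `[x, b + T]` of the
window `[x, x + T]` does not affect the supremum of `S` over that window.
-/

open scoped AddConstMap

theorem upperBounds_image_Icc_eq_of_forall_le {α β : Type*} [LinearOrder α] [Preorder β]
    {f : α → β} {x a z : α} (hxa : x ≤ a) (haz : a ≤ z) (hf : ∀ y ∈ Icc x a, f y ≤ f a) :
    upperBounds (f '' Icc x z) = upperBounds (f '' Icc a z) := by
  refine (upperBounds_mono_set (image_mono (Icc_subset_Icc_left hxa))).antisymm ?_
  rintro u hu _ ⟨y, hy, rfl⟩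
  rcases le_total y a with hya | hay
  · exact (hf y ⟨hy.1, hya⟩).trans (hu (mem_image_of_mem f (left_mem_Icc.2 haz)))
  · exact hu (mem_image_of_mem f ⟨hay, hy.2⟩)

theorem addConstMap_image_Icc_add {α β : Type*} [AddCommMonoid α] [PartialOrder α]
    [IsOrderedCancelAddMonoid α] [ExistsAddOfLE α] [Add β] {T : α} {c : β}
    (S : α →+c[T, c] β) (b x : α) :
    S '' Icc (b + T) (x + T) = (· + c) '' (S '' Icc b x) := by
  rw [← image_add_const_Icc, image_image, image_image]
  simp only [AddConstMapClass.map_add_const]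

section Window

variable {α β : Type*} [AddCommMonoid α] [LinearOrder α] [IsOrderedCancelAddMonoid α]
  [ExistsAddOfLE α] [AddCommGroup β] {T x b : α} {c : β}

theorem isLUB_addConstMap_image_Icc_add [PartialOrder β] [IsOrderedAddMonoid β]
    (S : α →+c[T, c] β) (hb : ∀ y ∈ Icc b (b + T), S y ≤ S (b + T)) (hx : x ∈ Icc b (b + T))
    {M : β} (hM : IsLUB (S '' Icc b x) M) :
    IsLUB (S '' Icc x (x + T)) (M + c) := by
  have hbx : b + T ≤ x + T := by gcongr; exact hx.1
  have hle : ∀ y ∈ Icc x (b + T), S y ≤ S (b + T) := fun y hy => hb y (Icc_subset_Icc_left hx.1 hy)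
  rw [IsLUB, upperBounds_image_Icc_eq_of_forall_le hx.2 hbx hle, addConstMap_image_Icc_add]
  exact (OrderIso.addRight c).isLUB_image'.2 hM

theorem stmt_13_general [ConditionallyCompleteLattice β] [IsOrderedAddMonoid β]
    (S : α →+c[T, c] β) (hb : ∀ y ∈ Icc b (b + T), S y ≤ S (b + T)) (hx : x ∈ Icc b (b + T)) :
    sInf ((fun y => S x - S y) '' Icc x (x + T)) = S x - c - sSup (S '' Icc b x) := by
  have hbdd : BddAbove (S '' Icc b x) :=
    ⟨S (b + T), forall_mem_image.2 fun y hy => hb y (Icc_subset_Icc_right hx.2 hy)⟩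
  have hsup : IsLUB (S '' Icc x (x + T)) (sSup (S '' Icc b x) + c) :=
    isLUB_addConstMap_image_Icc_add S hb hx (isLUB_csSup ((nonempty_Icc.2 hx.1).image S) hbdd)
  have hinf : IsGLB ((S x - ·) '' (S '' Icc x (x + T))) (S x - (sSup (S '' Icc b x) + c)) :=
    (OrderIso.subLeft (S x)).isLUB_image'.2 hsup
  have hxT : x ≤ x + T := hx.2.trans (by gcongr; exact hx.1)
  rw [image_image] at hinf
  rw [hinf.csInf_eq ((nonempty_Icc.2 hxT).image _)]
  abel

end Window

/-- If `b ∈ ℝ` satisfies `S(b+1) = max_{y∈[b,b+1]} S(y)`, then for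
every `x ∈ [b,b+1]` one has `Φ(x) = S(x) − S(1) − max_{y∈[b,x]} S(y)`. -/
theorem stmt_13
    (F : ℝ → ℝ) (hF : Continuous F) (hFper : ∀ x, F (x + 1) = F x)
    (S : ℝ → ℝ) (hS : ∀ x, S x = ∫ t in (0:ℝ)..x, F t)
    (Φ : ℝ → ℝ) (hΦ : ∀ x, Φ x = sInf ((fun y => S x - S y) '' Icc x (x + 1)))
    (b : ℝ) (hb : ∀ y ∈ Icc b (b + 1), S y ≤ S (b + 1)) :
    ∀ x ∈ Icc b (b + 1), Φ x = S x - S 1 - sSup (S '' Icc b x) := by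
  have hS_add (y : ℝ) : S (y + 1) = S y + S 1 := by
    simpa only [← hS, zero_add] using
      Function.Periodic.intervalIntegral_add_eq_add hFper 0 y hF.intervalIntegrable
  exact fun x hx => (hΦ x).trans (stmt_13_general ⟨S, hS_add⟩ hb hx)
end

section
/- Suppose S(1) > 0 and S has a point of local maximum a ∈ ℝ. Then there exists a point b ∈ ℝ of local maximum of S such that S(b+1) = max_{y∈[b,b+1]} S(y); such a b can be taken as a point of [a,a+1] at which S attains max_{y∈[a,a+1]} S(y). -/
open Set Filter Topology

/-!
Write `S (x + 1) = S x + c` with `c = S 1`. A maximiser `b` of `S` over the period `[a, a + 1]` is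
a local maximum: this is clear in the interior, and at the endpoints it holds because `a` is a local
maximum, hence so is its translate `a + 1`. As `c ≥ 0`, passing from `[a, b]` to `[a + 1, b + 1]`
only raises values, so the bound `S ≤ S b` on `[a, a + 1]` becomes `S ≤ S b + c` on `[b, b + 1]`.
-/

section AddConstMap

open scoped AddConstMap

variable {G H : Type*} [AddCommMonoid H] {p a b : G} {c : H}

lemma isLocalMax_add_const [Preorder H] [IsOrderedAddMonoid H] [AddGroup G] [TopologicalSpace G]
    [ContinuousAdd G] (f : G →+c[p, c] H) (ha : IsLocalMax f a) : IsLocalMax f (a + p) := by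
  have nhds_add : 𝓝 (a + p) = map (· + p) (𝓝 a) :=
    ((Homeomorph.addRight p).map_nhds_eq a).symm
  rw [IsLocalMax, IsMaxFilter, nhds_add, eventually_map]
  filter_upwards [ha] with x hx
  simpa only [AddConstMapClass.map_add_const] using add_le_add_left hx c

variable [LinearOrder G]

lemma isLocalMax_of_isMaxOn_period [Preorder H] [IsOrderedAddMonoid H] [AddGroup G]
    [TopologicalSpace G] [OrderClosedTopology G] [ContinuousAdd G] (f : G →+c[p, c] H)
    (ha : IsLocalMax f a) (hb : b ∈ Icc a (a + p)) (hmax : IsMaxOn f (Icc a (a + p)) b) :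
    IsLocalMax f b := by
  rcases hb.1.eq_or_lt with rfl | hab
  · exact ha
  rcases hb.2.eq_or_lt with rfl | hbp
  · exact isLocalMax_add_const f ha
  · exact hmax.isLocalMax (Icc_mem_nhds hab hbp)

lemma isMaxOn_period_add_const [Preorder H] [IsOrderedAddMonoid H] [AddCommGroup G]
    [IsOrderedAddMonoid G] (f : G →+c[p, c] H) (hc : 0 ≤ c) (hb : b ∈ Icc a (a + p))
    (hmax : IsMaxOn f (Icc a (a + p)) b) : IsMaxOn f (Icc b (b + p)) (b + p) := by
  refine isMaxOn_iff.2 fun y hy ↦ ?_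
  rw [AddConstMapClass.map_add_const]
  rcases le_total y (a + p) with hya | hay
  · exact (isMaxOn_iff.1 hmax y ⟨hb.1.trans hy.1, hya⟩).trans (le_add_of_nonneg_right hc)
  · have hyp : y - p ∈ Icc a (a + p) :=
      ⟨le_sub_iff_add_le.2 hay, (sub_le_iff_le_add.2 hy.2).trans hb.2⟩
    calc f y = f (y - p) + c := by rw [← AddConstMapClass.map_add_const f, sub_add_cancel]
      _ ≤ f b + c := add_le_add_left (isMaxOn_iff.1 hmax _ hyp) c

theorem stmt_14_general [LinearOrder H] [IsOrderedAddMonoid H] [AddCommGroup G]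
    [IsOrderedAddMonoid G] [TopologicalSpace G] [OrderClosedTopology G] [ContinuousAdd G]
    [CompactIccSpace G] (f : G →+c[p, c] H) (hp : 0 ≤ p) (hc : 0 ≤ c)
    (hf : UpperSemicontinuousOn f (Icc a (a + p))) (ha : IsLocalMax f a) :
    ∃ b ∈ Icc a (a + p), IsLocalMax f b ∧ IsMaxOn f (Icc a (a + p)) b ∧
      IsMaxOn f (Icc b (b + p)) (b + p) := by
  obtain ⟨b, hb, hmax⟩ :=
    hf.exists_isMaxOn (nonempty_Icc.2 (le_add_of_nonneg_right hp)) isCompact_Icc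
  exact ⟨b, hb, isLocalMax_of_isMaxOn_period f ha hb hmax, hmax,
    isMaxOn_period_add_const f hc hb hmax⟩

end AddConstMap

/-- Suppose `S(1) > 0` and `S` has a point of local maximum `a`.
Then there exists a point `b ∈ [a,a+1]` of local maximum of `S` such that
`S(b+1) = max_{y∈[b,b+1]} S(y)`; such a `b` can be taken as a point of
`[a,a+1]` at which `S` attains `max_{y∈[a,a+1]} S(y)`. -/
theorem stmt_14
    (F : ℝ → ℝ) (hF : Continuous F) (hFper : ∀ x, F (x + 1) = F x)
    (S : ℝ → ℝ) (hS : ∀ x, S x = ∫ t in (0:ℝ)..x, F t)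
    (hS1 : 0 < S 1) (a : ℝ) (ha : IsLocalMax S a) :
    ∃ b ∈ Icc a (a + 1), IsLocalMax S b ∧
      (∀ y ∈ Icc a (a + 1), S y ≤ S b) ∧
      (∀ y ∈ Icc b (b + 1), S y ≤ S (b + 1)) := by
  have hint : ∀ u v, IntervalIntegrable F MeasureTheory.volume u v := hF.intervalIntegrable
  have hS_cont : Continuous S := funext hS ▸ intervalIntegral.continuous_primitive hint 0
  have hS_add_one : ∀ x, S (x + 1) = S x + S 1 := fun x ↦ by
    simpa only [hS, zero_add] using
      Function.Periodic.intervalIntegral_add_eq_add hFper 0 x hint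
  exact stmt_14_general (AddConstMap.mk S hS_add_one) zero_le_one hS1.le
    (hS_cont.upperSemicontinuous.upperSemicontinuousOn _) ha
end

section
/- Assume S(1) ≠ 0 and S is not monotone, and set U = {x ∈ ℝ : Φ(x) ≠ min{0, −S(1)}}. Then for every maximal connected component (u⁻, u⁺) of the open set U, one has F(u⁻) ≤ 0 and F(u⁺) ≥ 0. -/
open Set Filter Topology

/-!
A point `x` lies outside `U` exactly when `S` attains its maximum over `[x, x + 1]` at the left
endpoint (if `S 1 ≤ 0`) or at the right endpoint (if `0 ≤ S 1`). Since `S (x + 1) = S x + S 1`, the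
latter says that `x` maximises `S` over `[x - 1, x]`, so the two cases are mirror images.

Suppose `S 1 ≤ 0`. As `u₁ ∉ U` maximises `S` over the window to its right, `F u₁ ≤ 0`. For `u₂`, let
`x ∈ (u₁, u₂)` and let `z` maximise `S` over `[x, u₂]`. If `S x > S u₂`, then `z < u₂`, and since
`u₂` maximises `S` over `[u₂, u₂ + 1]`, the point `z` maximises `S` over `[z, z + 1]`. This
contradicts `z ∈ U`. Hence `S ≤ S u₂` to the left of `u₂`, and `0 ≤ F u₂`.
-/

section WindowMaximum

open OrderDual

variable {α β : Type*} [ConditionallyCompleteLinearOrder α] [TopologicalSpace α] [OrderTopology α]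
  [LinearOrder β] [TopologicalSpace β] [ClosedIciTopology β] {f : α → β} {w : α → α} {a b : α}

lemma le_of_isMaxOn_Icc_right_of_forall_not (hw : Monotone w) (hab : a ≤ b)
    (hf : ContinuousOn f (Icc a b)) (hb : IsMaxOn f (Icc b (w b)) b)
    (hnot : ∀ x ∈ Ico a b, ¬ IsMaxOn f (Icc x (w x)) x) : f a ≤ f b := by
  obtain ⟨z, hz, hzmax⟩ := isCompact_Icc.exists_isMaxOn (nonempty_Icc.2 hab) hf
  suffices hzb : z = b from hzb ▸ hzmax (left_mem_Icc.2 hab)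
  by_contra hne
  refine hnot z ⟨hz.1, hz.2.lt_of_ne hne⟩ fun y hy ↦ ?_
  rcases le_total y b with hyb | hby
  · exact hzmax ⟨hz.1.trans hy.1, hyb⟩
  · exact (hb ⟨hby, hy.2.trans (hw hz.2)⟩).trans (hzmax (right_mem_Icc.2 hab))

lemma le_of_isMaxOn_Icc_left_of_forall_not (hw : Monotone w) (hab : a ≤ b)
    (hf : ContinuousOn f (Icc a b)) (ha : IsMaxOn f (Icc (w a) a) a)
    (hnot : ∀ x ∈ Ioc a b, ¬ IsMaxOn f (Icc (w x) x) x) : f b ≤ f a := by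
  have hdual (x : α) : IsMaxOn (f ∘ ofDual) (Icc (toDual x) (toDual (w x))) (toDual x) ↔
      IsMaxOn f (Icc (w x) x) x := by
    rw [Icc_toDual]
    rfl
  have hcont : ContinuousOn (f ∘ ofDual) (Icc (toDual b) (toDual a)) := by
    rwa [Icc_toDual]
  exact le_of_isMaxOn_Icc_right_of_forall_not (w := toDual ∘ w ∘ ofDual) hw.dual
    (toDual_le_toDual.2 hab) hcont ((hdual a).2 ha)
    fun x hx ↦ (hdual (ofDual x)).not.2 (hnot (ofDual x) hx.symm)

end WindowMaximum

section OneSidedFermat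

variable {f : ℝ → ℝ} {f' a b : ℝ}

lemma mul_sub_nonpos_of_isMaxOn_uIcc (hmax : IsMaxOn f (uIcc a b) a)
    (hf : HasDerivWithinAt f f' (uIcc a b) a) : f' * (b - a) ≤ 0 := by
  have hcone : b - a ∈ posTangentConeAt (uIcc a b) a :=
    sub_mem_posTangentConeAt_of_segment_subset (segment_eq_uIcc a b).subset
  simpa [mul_comm] using hmax.localize.hasFDerivWithinAt_nonpos hf.hasFDerivWithinAt hcone

lemma nonpos_of_isMaxOn_Icc_left (hab : a < b) (hmax : IsMaxOn f (Icc a b) a)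
    (hf : HasDerivWithinAt f f' (Ici a) a) : f' ≤ 0 := by
  rw [← uIcc_of_le hab.le] at hmax
  have hmul := mul_sub_nonpos_of_isMaxOn_uIcc hmax
    (hf.mono (uIcc_of_le hab.le ▸ Icc_subset_Ici_self))
  exact nonpos_of_mul_nonpos_left hmul (sub_pos.2 hab)

lemma nonneg_of_isMaxOn_Icc_right (hab : a < b) (hmax : IsMaxOn f (Icc a b) b)
    (hf : HasDerivWithinAt f f' (Iic b) b) : 0 ≤ f' := by
  rw [← uIcc_of_ge hab.le] at hmax
  have hmul := mul_sub_nonpos_of_isMaxOn_uIcc hmax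
    (hf.mono (uIcc_of_ge hab.le ▸ Icc_subset_Iic_self))
  exact nonneg_of_mul_nonpos_left hmul (sub_neg.2 hab)

end OneSidedFermat

lemma integral_zero_add_period {E : Type*} [NormedAddCommGroup E] [NormedSpace ℝ E] {F : ℝ → E}
    {T : ℝ} (hper : Function.Periodic F T)
    (hF : ∀ a b, IntervalIntegrable F MeasureTheory.volume a b) (x : ℝ) :
    ∫ t in 0..x + T, F t = (∫ t in 0..x, F t) + ∫ t in 0..T, F t := by
  simpa only [zero_add] using hper.intervalIntegral_add_eq_add 0 x hF

lemma sInf_image_const_sub_eq_iff_isMaxOn {X : Type*} {f : X → ℝ} {K : Set X} {m : X} (c : ℝ)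
    (hf : BddAbove (f '' K)) (hm : m ∈ K) :
    sInf ((fun y ↦ c - f y) '' K) = c - f m ↔ IsMaxOn f K m := by
  constructor
  · intro h y hy
    obtain ⟨B, hB⟩ := hf
    have hbdd : BddBelow ((fun y ↦ c - f y) '' K) :=
      ⟨c - B, forall_mem_image.2 fun z hz ↦ sub_le_sub_left (hB (mem_image_of_mem f hz)) c⟩
    exact (sub_le_sub_iff_left c).1 (h ▸ csInf_le hbdd (mem_image_of_mem _ hy))
  · intro h
    exact IsLeast.csInf_eq
      ⟨mem_image_of_mem _ hm, forall_mem_image.2 fun y hy ↦ sub_le_sub_left (h hy) c⟩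

/-- The function `Φ` of the theorem, for windows of length `T`: the minimum of `S x - S y` over
`y ∈ [x, x + T]`. It is written as an infimum, which is attained when `S` is continuous and
`0 ≤ T`. -/
noncomputable def minWindowDrop (S : ℝ → ℝ) (T x : ℝ) : ℝ :=
  sInf ((fun y ↦ S x - S y) '' Icc x (x + T))

section QuasiPeriodic

variable {S : ℝ → ℝ} {T c x : ℝ}

lemma isMaxOn_Icc_add_iff_isMaxOn_Icc_sub (hadd : ∀ x, S (x + T) = S x + c) :
    IsMaxOn S (Icc x (x + T)) (x + T) ↔ IsMaxOn S (Icc (x - T) x) x := by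
  have hshift : Icc x (x + T) = (· + T) '' Icc (x - T) x := by simp
  simp only [isMaxOn_iff, hshift, forall_mem_image, hadd, add_le_add_iff_right]

lemma minWindowDrop_eq_min_iff_of_nonpos (hS : Continuous S) (hT : 0 ≤ T) (hc : c ≤ 0) :
    minWindowDrop S T x = min 0 (-c) ↔ IsMaxOn S (Icc x (x + T)) x := by
  rw [min_eq_left (neg_nonneg.2 hc), ← sub_self (S x)]
  exact sInf_image_const_sub_eq_iff_isMaxOn _ (isCompact_Icc.bddAbove_image hS.continuousOn)
    (left_mem_Icc.2 (by linarith))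

lemma minWindowDrop_eq_min_iff_of_nonneg (hS : Continuous S) (hT : 0 ≤ T)
    (hadd : ∀ x, S (x + T) = S x + c) (hc : 0 ≤ c) :
    minWindowDrop S T x = min 0 (-c) ↔ IsMaxOn S (Icc (x - T) x) x := by
  have hdrop : S x - S (x + T) = -c := by rw [hadd]; ring
  rw [min_eq_right (neg_nonpos.2 hc), ← hdrop, ← isMaxOn_Icc_add_iff_isMaxOn_Icc_sub hadd]
  exact sInf_image_const_sub_eq_iff_isMaxOn _ (isCompact_Icc.bddAbove_image hS.continuousOn)
    (right_mem_Icc.2 (by linarith))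

end QuasiPeriodic

section Gap

variable {S : ℝ → ℝ} {T u₁ u₂ d₁ d₂ : ℝ}

lemma nonpos_and_nonneg_of_isMaxOn_Icc_add (hS : Continuous S) (hT : 0 < T) (hu : u₁ < u₂)
    (hd₁ : HasDerivWithinAt S d₁ (Ici u₁) u₁) (hd₂ : HasDerivWithinAt S d₂ (Iic u₂) u₂)
    (hgap : ∀ x ∈ Ioo u₁ u₂, ¬ IsMaxOn S (Icc x (x + T)) x)
    (h₁ : IsMaxOn S (Icc u₁ (u₁ + T)) u₁) (h₂ : IsMaxOn S (Icc u₂ (u₂ + T)) u₂) :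
    d₁ ≤ 0 ∧ 0 ≤ d₂ := by
  obtain ⟨v, hv₁, hv₂⟩ := exists_between hu
  have hmax : IsMaxOn S (Icc v u₂) u₂ := fun x hx ↦
    le_of_isMaxOn_Icc_right_of_forall_not (add_left_mono (a := T)) hx.2 hS.continuousOn h₂
      fun y hy ↦ hgap y ⟨hv₁.trans_le (hx.1.trans hy.1), hy.2⟩
  exact ⟨nonpos_of_isMaxOn_Icc_left (lt_add_of_pos_right u₁ hT) h₁ hd₁,
    nonneg_of_isMaxOn_Icc_right hv₂ hmax hd₂⟩

lemma nonpos_and_nonneg_of_isMaxOn_Icc_sub (hS : Continuous S) (hT : 0 < T) (hu : u₁ < u₂)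
    (hd₁ : HasDerivWithinAt S d₁ (Ici u₁) u₁) (hd₂ : HasDerivWithinAt S d₂ (Iic u₂) u₂)
    (hgap : ∀ x ∈ Ioo u₁ u₂, ¬ IsMaxOn S (Icc (x - T) x) x)
    (h₁ : IsMaxOn S (Icc (u₁ - T) u₁) u₁) (h₂ : IsMaxOn S (Icc (u₂ - T) u₂) u₂) :
    d₁ ≤ 0 ∧ 0 ≤ d₂ := by
  obtain ⟨v, hv₁, hv₂⟩ := exists_between hu
  have hmax : IsMaxOn S (Icc u₁ v) u₁ := fun x hx ↦
    le_of_isMaxOn_Icc_left_of_forall_not (fun _ _ h ↦ sub_le_sub_right h T) hx.1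
      hS.continuousOn h₁ fun y hy ↦ hgap y ⟨hy.1, (hy.2.trans hx.2).trans_lt hv₂⟩
  exact ⟨nonpos_of_isMaxOn_Icc_left hv₁ hmax hd₁,
    nonneg_of_isMaxOn_Icc_right (sub_lt_self u₂ hT) h₂ hd₂⟩

end Gap

theorem stmt_16_general {S : ℝ → ℝ} {T c u₁ u₂ d₁ d₂ : ℝ} (hS : Continuous S) (hT : 0 < T)
    (hadd : ∀ x, S (x + T) = S x + c) (hu : u₁ < u₂)
    (hd₁ : HasDerivWithinAt S d₁ (Ici u₁) u₁) (hd₂ : HasDerivWithinAt S d₂ (Iic u₂) u₂)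
    (hgap : ∀ x ∈ Ioo u₁ u₂, minWindowDrop S T x ≠ min 0 (-c))
    (h₁ : minWindowDrop S T u₁ = min 0 (-c)) (h₂ : minWindowDrop S T u₂ = min 0 (-c)) :
    d₁ ≤ 0 ∧ 0 ≤ d₂ := by
  rcases le_total c 0 with hc | hc
  · simp only [ne_eq, minWindowDrop_eq_min_iff_of_nonpos hS hT.le hc] at hgap h₁ h₂
    exact nonpos_and_nonneg_of_isMaxOn_Icc_add hS hT hu hd₁ hd₂ hgap h₁ h₂
  · simp only [ne_eq, minWindowDrop_eq_min_iff_of_nonneg hS hT.le hadd hc] at hgap h₁ h₂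
    exact nonpos_and_nonneg_of_isMaxOn_Icc_sub hS hT hu hd₁ hd₂ hgap h₁ h₂

/-- Assume `S(1) ≠ 0` and `S` is not monotone, and let
`U = {x : Φ(x) ≠ min{0, −S(1)}}`. For every maximal connected component
`(u⁻,u⁺)` of the open set `U` (characterized by `(u⁻,u⁺) ⊆ U` with endpoints
`u⁻, u⁺ ∉ U`), one has `F(u⁻) ≤ 0` and `F(u⁺) ≥ 0`. -/
theorem stmt_16
    (F : ℝ → ℝ) (hF : Continuous F) (hFper : ∀ x, F (x + 1) = F x)
    (S : ℝ → ℝ) (hS : ∀ x, S x = ∫ t in (0:ℝ)..x, F t)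
    (Φ : ℝ → ℝ) (hΦ : ∀ x, Φ x = sInf ((fun y => S x - S y) '' Icc x (x + 1)))
    (hS1 : S 1 ≠ 0) (hmon : ¬ Monotone S) (hant : ¬ Antitone S) :
    ∀ u₁ u₂ : ℝ, u₁ < u₂ →
      Ioo u₁ u₂ ⊆ {x : ℝ | Φ x ≠ min 0 (-S 1)} →
      u₁ ∉ {x : ℝ | Φ x ≠ min 0 (-S 1)} →
      u₂ ∉ {x : ℝ | Φ x ≠ min 0 (-S 1)} →
      F u₁ ≤ 0 ∧ 0 ≤ F u₂ := by
  intro u₁ u₂ hu hgap h₁ h₂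
  obtain rfl : S = fun x ↦ ∫ t in 0..x, F t := funext hS
  obtain rfl : Φ = minWindowDrop _ 1 := funext hΦ
  have hderiv x := (hF.integral_hasStrictDerivAt 0 x).hasDerivAt
  exact stmt_16_general (continuous_iff_continuousAt.2 fun x ↦ (hderiv x).continuousAt) one_pos
    (integral_zero_add_period hFper hF.intervalIntegrable) hu (hderiv u₁).hasDerivWithinAt
    (hderiv u₂).hasDerivWithinAt hgap (not_not.1 h₁) (not_not.1 h₂)
end

section
/- For every x ∈ 𝕋 and every lift x̄ ∈ ℝ of x, W(x) + max_{y∈[x̄, x̄+1]} (S(y) − S(x̄)) = ∫₀¹ F₊(s) ds, where F₊ = max(F,0). In particular the left-hand side does not depend on x. -/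
open Set Filter Topology

/-!
On the universal cover, `lineCost F a b` (the cost `∫ F₊` of moving right, or `∫ F₋` of moving left)
is a directed distance, and the cost between two points of the torus is the least distance between
their lifts. The key identity is `W(x) = min_{y ∈ [x, x + 1]} (lineCost y x + lineCost y (x + 1))`.

* Every `y` gives a tree: the wells to the left of `y` step to the left and those to the right of
  `y` step to the right, so that the edges are disjoint pieces of the paths from `y` to `x` and from
  `y` to `x + 1`.
* Every tree gives a `y`: the optimal paths along its edges, cut where they leave `[x, x + 1)`, form
  two edge-disjoint families which drain the wells to `x` and to `x + 1` respectively. Between two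
  consecutive wells draining to opposite sides there is a hilltop `y`, from which both wells are
  reached at no cost.

Since `S(y) - S(x) = ∫₀¹ F₊ - (lineCost y x + lineCost y (x + 1))`, maximizing over `y` concludes.
-/

section LineCost

variable {F : ℝ → ℝ} {a b c : ℝ}

/-- The cost `∫ F₊` of moving clockwise, or `∫ F₋` of moving anticlockwise, from `a` to `b` on the
universal cover `ℝ` of the torus. At most one of the two summands is nonzero: the one for the wrong
direction is the positive part of a nonpositive integral. -/
noncomputable def lineCost (F : ℝ → ℝ) (a b : ℝ) : ℝ :=
  max (∫ s in a..b, max (F s) 0) 0 + max (∫ s in b..a, max (-F s) 0) 0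

theorem lineCost_nonneg : 0 ≤ lineCost F a b :=
  add_nonneg (le_max_right _ _) (le_max_right _ _)

theorem lineCost_self : lineCost F a a = 0 := by
  simp [lineCost]

theorem lineCost_of_le (hab : a ≤ b) : lineCost F a b = ∫ s in a..b, max (F s) 0 := by
  have forward_nonneg : 0 ≤ ∫ s in a..b, max (F s) 0 :=
    intervalIntegral.integral_nonneg hab fun _ _ => le_max_right _ _
  have backward_nonneg : 0 ≤ ∫ s in a..b, max (-F s) 0 :=
    intervalIntegral.integral_nonneg hab fun _ _ => le_max_right _ _
  rw [lineCost, intervalIntegral.integral_symm a b (f := fun s => max (-F s) 0),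
    max_eq_left forward_nonneg, max_eq_right (neg_nonpos.2 backward_nonneg), add_zero]

theorem lineCost_neg_comp_neg :
    lineCost (fun s => -F (-s)) (-a) (-b) = lineCost F a b := by
  simp only [lineCost, neg_neg,
    intervalIntegral.integral_comp_neg fun s => max (F s) 0,
    intervalIntegral.integral_comp_neg fun s => max (-F s) 0]
  exact add_comm _ _

theorem lineCost_of_ge (hba : b ≤ a) : lineCost F a b = ∫ s in b..a, max (-F s) 0 := by
  rw [← lineCost_neg_comp_neg, lineCost_of_le (neg_le_neg hba),
    intervalIntegral.integral_comp_neg fun s => max (-F s) 0, neg_neg, neg_neg]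

theorem lineCost_triangle (hF : Continuous F) (a b c : ℝ) :
    lineCost F a c ≤ lineCost F a b + lineCost F b c := by
  have hpos : Continuous fun s => max (F s) 0 := by fun_prop
  have hneg : Continuous fun s => max (-F s) 0 := by fun_prop
  have max_add_le (u v : ℝ) : max (u + v) 0 ≤ max u 0 + max v 0 := by
    simpa using max_add_add_le_max_add_max (a := u) (b := v) (c := 0) (d := 0)
  have forward := max_add_le (∫ s in a..b, max (F s) 0) (∫ s in b..c, max (F s) 0)
  have backward := max_add_le (∫ s in c..b, max (-F s) 0) (∫ s in b..a, max (-F s) 0)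
  rw [intervalIntegral.integral_add_adjacent_intervals (hpos.intervalIntegrable _ _)
    (hpos.intervalIntegrable _ _)] at forward
  rw [intervalIntegral.integral_add_adjacent_intervals (hneg.intervalIntegrable _ _)
    (hneg.intervalIntegrable _ _)] at backward
  simp only [lineCost]
  linarith

theorem lineCost_add_of_mem_uIcc (hF : Continuous F) (hb : b ∈ uIcc a c) :
    lineCost F a b + lineCost F b c = lineCost F a c := by
  have hpos : Continuous fun s => max (F s) 0 := by fun_prop
  have hneg : Continuous fun s => max (-F s) 0 := by fun_prop
  rcases mem_uIcc.1 hb with ⟨hab, hbc⟩ | ⟨hcb, hba⟩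
  · rw [lineCost_of_le hab, lineCost_of_le hbc, lineCost_of_le (hab.trans hbc)]
    exact intervalIntegral.integral_add_adjacent_intervals (hpos.intervalIntegrable _ _)
      (hpos.intervalIntegrable _ _)
  · rw [lineCost_of_ge hba, lineCost_of_ge hcb, lineCost_of_ge (hcb.trans hba), add_comm]
    exact intervalIntegral.integral_add_adjacent_intervals (hneg.intervalIntegrable _ _)
      (hneg.intervalIntegrable _ _)

theorem lineCost_le_of_mem_uIcc_right (hF : Continuous F) (hb : b ∈ uIcc a c) :
    lineCost F a b ≤ lineCost F a c := by
  linarith [lineCost_add_of_mem_uIcc hF hb, lineCost_nonneg (F := F) (a := b) (b := c)]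

theorem lineCost_le_of_mem_uIcc_left (hF : Continuous F) (hb : b ∈ uIcc a c) :
    lineCost F b c ≤ lineCost F a c := by
  linarith [lineCost_add_of_mem_uIcc hF hb, lineCost_nonneg (F := F) (a := a) (b := b)]

theorem lineCost_eq_zero_of_nonpos (hab : a ≤ b) (hF : ∀ s ∈ Ioo a b, F s ≤ 0) :
    lineCost F a b = 0 := by
  rw [lineCost_of_le hab, intervalIntegral.integral_of_le hab,
    MeasureTheory.integral_Ioc_eq_integral_Ioo]
  exact MeasureTheory.setIntegral_eq_zero_of_forall_eq_zero fun s hs => max_eq_right (hF s hs)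

theorem lineCost_eq_zero_of_nonneg (hba : b ≤ a) (hF : ∀ s ∈ Ioo b a, 0 ≤ F s) :
    lineCost F a b = 0 := by
  rw [← lineCost_neg_comp_neg]
  refine lineCost_eq_zero_of_nonpos (neg_le_neg hba) fun s hs => neg_nonpos.2 (hF _ ?_)
  exact ⟨lt_neg.1 hs.2, neg_lt.1 hs.1⟩

theorem intervalIntegral_eq_sub_lineCost (hF : Continuous F) (hb : b ∈ Icc a c) :
    ∫ s in a..b, F s =
      (∫ s in a..c, max (F s) 0) - (lineCost F b a + lineCost F b c) := by
  have hpos : Continuous fun s => max (F s) 0 := by fun_prop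
  have hneg : Continuous fun s => max (-F s) 0 := by fun_prop
  have jordan : ∫ s in a..b, F s =
      (∫ s in a..b, max (F s) 0) - ∫ s in a..b, max (-F s) 0 := by
    rw [← intervalIntegral.integral_sub (hpos.intervalIntegrable _ _)
      (hneg.intervalIntegrable _ _)]
    exact intervalIntegral.integral_congr fun s _ => (posPart_sub_negPart (F s)).symm
  rw [lineCost_of_ge hb.1, lineCost_of_le hb.2, jordan,
    ← intervalIntegral.integral_add_adjacent_intervals (hpos.intervalIntegrable a b)
      (hpos.intervalIntegrable b c)]
  ring

theorem exists_hilltop_of_no_upcrossing (hab : a ≤ b)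
    (hF : ∀ v ∈ Ioo a b, ∀ w ∈ Ioo a b, v < w → F v < 0 → F w ≤ 0) :
    ∃ y ∈ Icc a b, lineCost F y a = 0 ∧ lineCost F y b = 0 := by
  have positive_bdd : BddAbove (insert a {z ∈ Ioo a b | 0 < F z}) :=
    ⟨b, by rintro z (rfl | hz); exacts [hab, hz.1.2.le]⟩
  have hlub := isLUB_csSup (insert_nonempty a {z ∈ Ioo a b | 0 < F z}) positive_bdd
  set y := sSup (insert a {z ∈ Ioo a b | 0 < F z})
  have hay : a ≤ y := hlub.1 (mem_insert _ _)
  have hyb : y ≤ b := hlub.2 (by rintro z (rfl | hz); exacts [hab, hz.1.2.le])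
  refine ⟨y, ⟨hay, hyb⟩, lineCost_eq_zero_of_nonneg hay fun s hs => ?_,
    lineCost_eq_zero_of_nonpos hyb fun s hs => ?_⟩
  · by_contra! hneg
    obtain ⟨z, rfl | ⟨hz, hFz⟩, hsz, -⟩ := hlub.exists_between hs.2
    · exact hsz.not_gt hs.1
    · exact hFz.not_ge (hF s ⟨hs.1, hs.2.trans_le hyb⟩ z hz hsz hneg)
  · by_contra! hpos
    exact hs.1.not_ge (hlub.1 (Or.inr ⟨⟨hay.trans_lt hs.1, hs.2⟩, hpos⟩))

end LineCost

section TorusCost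

variable {F G : ℝ → ℝ}

theorem intervalIntegral_add_int_of_periodic (hG : Function.Periodic G 1) (a b : ℝ) (k : ℤ) :
    ∫ s in (a + k)..(b + k), G s = ∫ s in a..b, G s := by
  rw [← intervalIntegral.integral_comp_add_right]
  exact intervalIntegral.integral_congr fun s _ => by simpa using hG.int_mul k s

theorem periodic_max_zero (hper : Function.Periodic F 1) :
    Function.Periodic (fun s => max (F s) 0) 1 :=
  hper.comp fun t => max t 0

theorem periodic_max_neg_zero (hper : Function.Periodic F 1) :
    Function.Periodic (fun s => max (-F s) 0) 1 :=
  hper.comp fun t => max (-t) 0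

theorem periodic_neg_comp_neg (hper : Function.Periodic F 1) :
    Function.Periodic (fun s => -F (-s)) 1 := fun s => by
  simp only [neg_add', hper.sub_eq]

theorem lineCost_add_int (hper : Function.Periodic F 1) (a b : ℝ) (k : ℤ) :
    lineCost F (a + k) (b + k) = lineCost F a b := by
  simp only [lineCost, intervalIntegral_add_int_of_periodic (periodic_max_zero hper),
    intervalIntegral_add_int_of_periodic (periodic_max_neg_zero hper)]

/-- The cost `V(u, v) = min (V₊(u, v)) (V₋(u, v))` of moving between the classes of `u` and `v` on
the torus; the arcs are lifted to `[u, u + 1)` and `[v, v + 1)` respectively. -/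
noncomputable def torusCost (F : ℝ → ℝ) (u v : ℝ) : ℝ :=
  min (∫ s in u..(u + Int.fract (v - u)), max (F s) 0)
    (∫ s in v..(v + Int.fract (u - v)), max (-F s) 0)

theorem isLeast_torusCost (hF : Continuous F) (hper : Function.Periodic F 1) (u v : ℝ) :
    IsLeast (range fun k : ℤ => lineCost F u (v + k)) (torusCost F u v) := by
  have forward : ∫ s in u..(u + Int.fract (v - u)), max (F s) 0
      = lineCost F u (v + (-⌊v - u⌋ : ℤ)) := by
    rw [← lineCost_of_le (by simp [Int.fract_nonneg])]
    congr 1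
    simp only [Int.fract, Int.cast_neg]
    ring
  have backward : ∫ s in v..(v + Int.fract (u - v)), max (-F s) 0
      = lineCost F u (v + ⌊u - v⌋) := by
    rw [← lineCost_of_ge (by simp [Int.fract_nonneg]), ← lineCost_add_int hper _ _ ⌊u - v⌋]
    congr 1
    simp only [Int.fract]
    ring
  rw [torusCost, forward, backward]
  refine ⟨?_, ?_⟩
  · rcases min_choice (lineCost F u (v + (-⌊v - u⌋ : ℤ))) (lineCost F u (v + ⌊u - v⌋)) with h | h
      <;> rw [h] <;> exact mem_range_self _
  · rintro _ ⟨k, rfl⟩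
    rcases le_total u (v + k) with huk | hku
    · have hfloor : -⌊v - u⌋ ≤ k := by
        rw [neg_le, Int.le_floor]
        push_cast
        linarith
      refine min_le_of_left_le (lineCost_le_of_mem_uIcc_right hF (mem_uIcc_of_le ?_ ?_))
      · push_cast
        linarith [Int.floor_le (v - u)]
      · have : ((-⌊v - u⌋ : ℤ) : ℝ) ≤ k := Int.cast_le.2 hfloor
        linarith
    · have hfloor : k ≤ ⌊u - v⌋ := by
        rw [Int.le_floor]
        linarith
      refine min_le_of_right_le (lineCost_le_of_mem_uIcc_right hF (mem_uIcc_of_ge ?_ ?_))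
      · have : (k : ℝ) ≤ ⌊u - v⌋ := Int.cast_le.2 hfloor
        linarith
      · linarith [Int.floor_le (u - v)]

theorem torusCost_le_lineCost (hF : Continuous F) (hper : Function.Periodic F 1) (u v : ℝ)
    (k : ℤ) : torusCost F u v ≤ lineCost F u (v + k) :=
  (isLeast_torusCost hF hper u v).2 (mem_range_self k)

theorem torusCost_neg_comp_neg (hF : Continuous F) (hper : Function.Periodic F 1) (u v : ℝ) :
    torusCost (fun s => -F (-s)) (-u) (-v) = torusCost F u v := by
  have lifts_eq : (range fun k : ℤ => lineCost (fun s => -F (-s)) (-u) (-v + k))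
      = range fun k : ℤ => lineCost F u (v + k) := by
    rw [← (Equiv.neg ℤ).surjective.range_comp]
    congr! with k
    rw [← lineCost_neg_comp_neg]
    simp [add_comm]
  have hleast := isLeast_torusCost (F := fun s => -F (-s)) (by fun_prop)
    (periodic_neg_comp_neg hper) (-u) (-v)
  rw [lifts_eq] at hleast
  exact hleast.unique (isLeast_torusCost hF hper u v)

theorem torusCost_add_int_right (hper : Function.Periodic F 1) (u v : ℝ) (k : ℤ) :
    torusCost F u (v + k) = torusCost F u v := by
  rw [torusCost, torusCost, add_right_comm v,
    intervalIntegral_add_int_of_periodic (periodic_max_neg_zero hper), add_sub_right_comm,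
    Int.fract_add_intCast, sub_add_eq_sub_sub, Int.fract_sub_intCast]

theorem torusCost_add_int_left (hper : Function.Periodic F 1) (u v : ℝ) (k : ℤ) :
    torusCost F (u + k) v = torusCost F u v := by
  rw [torusCost, torusCost, add_right_comm u,
    intervalIntegral_add_int_of_periodic (periodic_max_zero hper), add_sub_right_comm,
    Int.fract_add_intCast, sub_add_eq_sub_sub, Int.fract_sub_intCast]

/-- An optimal path on the torus is cut where its lift leaves `[x, x + 1)`. -/
theorem exists_lineCost_le_torusCost (hF : Continuous F) (hper : Function.Periodic F 1)
    {x u v : ℝ} (hu : u ∈ Icc x (x + 1)) (hv : v ∈ Ico x (x + 1)) :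
    ∃ d, (d = x ∨ d = x + 1 ∨ d = v) ∧ lineCost F u d ≤ torusCost F u v := by
  obtain ⟨k, hk⟩ := (isLeast_torusCost hF hper u v).1
  rw [← hk]
  rcases lt_trichotomy k 0 with hneg | rfl | hpos
  · have : (k : ℝ) ≤ -1 := by exact_mod_cast Int.le_sub_one_of_lt hneg
    exact ⟨x, Or.inl rfl, lineCost_le_of_mem_uIcc_right hF
      (mem_uIcc_of_ge (by linarith [hv.2]) hu.1)⟩
  · exact ⟨v, Or.inr (Or.inr rfl), by simp⟩
  · have : (1 : ℝ) ≤ k := by exact_mod_cast hpos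
    exact ⟨x + 1, Or.inr (Or.inl rfl), lineCost_le_of_mem_uIcc_right hF
      (mem_uIcc_of_le hu.2 (by linarith [hv.1]))⟩

end TorusCost

section Upcrossings

section OneSided

variable {α : Type*} [LinearOrder α] [TopologicalSpace α] [OrderTopology α] {C : Set α}

theorem eventually_mem_or_notMem_nhdsGT_of_ordConnected (hC : C.OrdConnected) (t : α) :
    (∀ᶠ s in 𝓝[>] t, s ∈ C) ∨ ∀ᶠ s in 𝓝[>] t, s ∉ C := by
  refine or_iff_not_imp_right.2 fun hfreq => ?_
  rw [not_eventually] at hfreq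
  simp only [not_not] at hfreq
  obtain ⟨s, hs, hts⟩ := (hfreq.and_eventually self_mem_nhdsWithin).exists
  filter_upwards [Ioo_mem_nhdsGT hts] with r hr
  obtain ⟨q, hq, hqr⟩ := (hfreq.and_eventually (Ioo_mem_nhdsGT hr.1)).exists
  exact hC.out hq hs ⟨hqr.2.le, hr.2.le⟩

theorem eventually_mem_or_notMem_nhdsLT_of_ordConnected (hC : C.OrdConnected) (t : α) :
    (∀ᶠ s in 𝓝[<] t, s ∈ C) ∨ ∀ᶠ s in 𝓝[<] t, s ∉ C :=
  eventually_mem_or_notMem_nhdsGT_of_ordConnected (α := αᵒᵈ) hC.dual t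

end OneSided

section ExitPoint

variable {α : Type*} [ConditionallyCompleteLinearOrder α] [DenselyOrdered α] [TopologicalSpace α]
  [OrderTopology α] {C : Set α} {v w : α}

theorem exists_exit_point_right (hC : IsClosed C) (hvw : v ≤ w) (hv : v ∈ C) (hw : w ∉ C) :
    ∃ b ∈ Ico v w, Icc v b ⊆ C ∧ ∃ᶠ s in 𝓝[>] b, s ∉ C := by
  have hne : (Icc v w \ C).Nonempty := ⟨w, ⟨hvw, le_rfl⟩, hw⟩
  have hglb := isGLB_csInf hne ⟨v, fun z hz => hz.1.1⟩
  set b := sInf (Icc v w \ C)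
  have hvb : v ≤ b := hglb.2 fun z hz => hz.1.1
  have hbw : b ≤ w := hglb.1 ⟨⟨hvw, le_rfl⟩, hw⟩
  have hIco : Ico v b ⊆ C := fun z hz =>
    by_contra fun hzC => hz.2.not_ge (hglb.1 ⟨⟨hz.1, hz.2.le.trans hbw⟩, hzC⟩)
  have hIcc : Icc v b ⊆ C := by
    rcases hvb.eq_or_lt with hvb | hvb
    · rw [← hvb, Icc_self]
      exact singleton_subset_iff.2 hv
    · rw [← closure_Ico hvb.ne]
      exact closure_minimal hIco hC
  have hbC : b ∈ C := hIcc ⟨hvb, le_rfl⟩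
  refine ⟨b, ⟨hvb, hbw.lt_of_ne (ne_of_mem_of_not_mem hbC hw)⟩, hIcc, ?_⟩
  rw [frequently_nhdsWithin_iff]
  refine (frequently_nhdsWithin_iff.1 (hglb.frequently_mem hne)).mono fun s hs => ⟨hs.1.2, ?_⟩
  exact lt_of_le_of_ne hs.2 (ne_of_mem_of_not_mem hbC hs.1.2)

theorem exists_exit_point_left (hC : IsClosed C) (hvw : v ≤ w) (hv : v ∉ C) (hw : w ∈ C) :
    ∃ a ∈ Ioc v w, Icc a w ⊆ C ∧ ∃ᶠ s in 𝓝[<] a, s ∉ C := by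
  obtain ⟨a, ha, hsub, hfreq⟩ := exists_exit_point_right (α := αᵒᵈ) (C := C)
    (v := w) (w := v) hC hvw hw hv
  exact ⟨a, ⟨ha.2, ha.1⟩, fun z hz => hsub ⟨hz.2, hz.1⟩, hfreq⟩

end ExitPoint

theorem eventually_mem_or_notMem_of_finite_connectedComponents {Z : Set ℝ}
    [Finite (ConnectedComponents Z)] {l : Filter ℝ}
    (hl : ∀ C : Set ℝ, C.OrdConnected → (∀ᶠ s in l, s ∈ C) ∨ ∀ᶠ s in l, s ∉ C) :
    (∀ᶠ s in l, s ∈ Z) ∨ ∀ᶠ s in l, s ∉ Z := by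
  let component (c : ConnectedComponents Z) : Set ℝ :=
    Subtype.val '' (ConnectedComponents.mk ⁻¹' {c})
  have ordConnected (c : ConnectedComponents Z) : (component c).OrdConnected := by
    obtain ⟨z, rfl⟩ := ConnectedComponents.surjective_coe c
    simp only [component, connectedComponents_preimage_singleton]
    exact (isPreconnected_connectedComponent.image _
      continuous_subtype_val.continuousOn).ordConnected
  by_cases hin : ∃ c, ∀ᶠ s in l, s ∈ component c
  · obtain ⟨c, hc⟩ := hin
    exact Or.inl (hc.mono fun s ⟨z, _, hz⟩ => hz ▸ z.2)
  · have hout : ∀ᶠ s in l, ∀ c, s ∉ component c :=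
      eventually_all.2 fun c => (hl _ (ordConnected c)).resolve_left fun h => hin ⟨c, h⟩
    exact Or.inr (hout.mono fun s hs hsZ => hs _ ⟨⟨s, hsZ⟩, rfl, rfl⟩)

variable {F : ℝ → ℝ}

theorem eventually_zero_or_ne_zero_of_periodic (hper : Function.Periodic F 1)
    (hfin : Finite (ConnectedComponents {x : ℝ | F x = 0 ∧ x ∈ Icc (0 : ℝ) 1}))
    {l : Filter ℝ} (n : ℤ) (hn : ∀ᶠ s in l, s - (n : ℝ) ∈ Icc (0 : ℝ) 1)
    (hl : ∀ C : Set ℝ, C.OrdConnected → (∀ᶠ s in l, s ∈ C) ∨ ∀ᶠ s in l, s ∉ C) :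
    (∀ᶠ s in l, F s = 0) ∨ ∀ᶠ s in l, F s ≠ 0 := by
  have shift (s : ℝ) : F (s - n) = F s := by simpa using hper.sub_int_mul_eq n (x := s)
  have shifted := eventually_mem_or_notMem_of_finite_connectedComponents (l := l.map (· - (n : ℝ)))
    (Z := {x : ℝ | F x = 0 ∧ x ∈ Icc (0 : ℝ) 1}) fun C hC =>
      hl _ (hC.preimage_mono fun _ _ h => sub_le_sub_right h _)
  simp only [eventually_map, mem_ofPred_eq, shift] at shifted
  refine shifted.imp (fun h => h.mono fun s hs => hs.1) fun h => ?_
  filter_upwards [h, hn] with s hs hsn hFs using hs ⟨hFs, hsn⟩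

theorem eventually_ne_zero_nhdsGT (hper : Function.Periodic F 1)
    (hfin : Finite (ConnectedComponents {x : ℝ | F x = 0 ∧ x ∈ Icc (0 : ℝ) 1})) {t : ℝ}
    (ht : ∃ᶠ s in 𝓝[>] t, F s ≠ 0) : ∀ᶠ s in 𝓝[>] t, F s ≠ 0 := by
  refine (eventually_zero_or_ne_zero_of_periodic hper hfin ⌊t⌋ ?_ fun C hC =>
    eventually_mem_or_notMem_nhdsGT_of_ordConnected hC t).resolve_left
      fun hzero => ht (hzero.mono fun _ hs hne => hne hs)
  filter_upwards [Ioo_mem_nhdsGT (Int.lt_floor_add_one t)] with s hs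
  exact ⟨by linarith [Int.floor_le t, hs.1], by linarith [hs.2]⟩

theorem eventually_ne_zero_nhdsLT (hper : Function.Periodic F 1)
    (hfin : Finite (ConnectedComponents {x : ℝ | F x = 0 ∧ x ∈ Icc (0 : ℝ) 1})) {t : ℝ}
    (ht : ∃ᶠ s in 𝓝[<] t, F s ≠ 0) : ∀ᶠ s in 𝓝[<] t, F s ≠ 0 := by
  refine (eventually_zero_or_ne_zero_of_periodic hper hfin (⌈t⌉ - 1) ?_ fun C hC =>
    eventually_mem_or_notMem_nhdsLT_of_ordConnected hC t).resolve_left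
      fun hzero => ht (hzero.mono fun _ hs hne => hne hs)
  filter_upwards [Ioo_mem_nhdsLT (sub_lt_iff_lt_add.2 (Int.ceil_lt_add_one t))] with s hs
  push_cast
  exact ⟨by linarith [hs.1], by linarith [Int.le_ceil t, hs.2]⟩

theorem eventually_neg_nhdsLT_of_ne_zero (hF : Continuous F) {t : ℝ}
    (hne : ∀ᶠ s in 𝓝[<] t, F s ≠ 0) (hneg : ∃ᶠ s in 𝓝[<] t, F s < 0) :
    ∀ᶠ s in 𝓝[<] t, F s < 0 := by
  obtain ⟨l, hl, hne⟩ := mem_nhdsLT_iff_exists_Ioo_subset.1 hne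
  obtain ⟨v, hFv, hv⟩ := (hneg.and_eventually (Ioo_mem_nhdsLT hl)).exists
  filter_upwards [Ioo_mem_nhdsLT hl] with s hs
  by_contra! hFs
  obtain ⟨z, hz, hFz⟩ := isPreconnected_Ioo.intermediate_value hv hs hF.continuousOn ⟨hFv.le, hFs⟩
  exact hne hz hFz

/-- `[a, b]` is a stable component of the zero set of `F`, that is a well of the potential `∫ F`;
the sign conditions on both sides are stated through one-sided neighbourhoods. -/
structure IsStableInterval (F : ℝ → ℝ) (a b : ℝ) : Prop where
  le : a ≤ b
  eq_zero : ∀ x ∈ Icc a b, F x = 0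
  neg_left : ∀ᶠ x in 𝓝[<] a, F x < 0
  pos_right : ∀ᶠ x in 𝓝[>] b, 0 < F x

theorem IsStableInterval.exists_uniform_margin {a b : ℝ} (h : IsStableInterval F a b) :
    ∃ ε > 0, (∀ x ∈ Ico (a - ε) a, F x < 0) ∧ ∀ x ∈ Ioc b (b + ε), 0 < F x := by
  obtain ⟨l, hl, hneg⟩ := mem_nhdsLT_iff_exists_Ico_subset.1 h.neg_left
  obtain ⟨u, hu, hpos⟩ := mem_nhdsGT_iff_exists_Ioc_subset.1 h.pos_right
  refine ⟨min (a - l) (u - b), lt_min (sub_pos.2 hl) (sub_pos.2 hu), fun x hx => hneg ?_,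
    fun x hx => hpos ?_⟩
  · exact ⟨by linarith [hx.1, min_le_left (a - l) (u - b)], hx.2⟩
  · exact ⟨hx.1, by linarith [hx.2, min_le_right (a - l) (u - b)]⟩

theorem exists_isStableInterval_of_upcrossing (hF : Continuous F) (hper : Function.Periodic F 1)
    (hfin : Finite (ConnectedComponents {x : ℝ | F x = 0 ∧ x ∈ Icc (0 : ℝ) 1})) {v w : ℝ}
    (hvw : v < w) (hv : F v < 0) (hw : 0 < F w) :
    ∃ a b, v < a ∧ b < w ∧ IsStableInterval F a b := by
  obtain ⟨a, ⟨hva, haw⟩, hnonneg, hfreq_neg⟩ := exists_exit_point_left (C := {s | 0 ≤ F s})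
    (isClosed_le continuous_const hF) hvw.le hv.not_ge hw.le
  simp only [mem_ofPred_eq, not_le] at hfreq_neg
  have hFa : F a ≤ 0 := le_of_tendsto_of_frequently (hF.tendsto a |>.mono_left nhdsWithin_le_nhds)
    (hfreq_neg.mono fun _ => le_of_lt)
  obtain ⟨b, ⟨hab, hbw⟩, hnonpos, hfreq_pos⟩ := exists_exit_point_right (C := {s | F s ≤ 0})
    (isClosed_le hF continuous_const) haw hFa hw.not_ge
  simp only [mem_ofPred_eq, not_le] at hfreq_pos
  refine ⟨a, b, hva, hbw, hab,
    fun s hs => (hnonpos hs).antisymm (hnonneg ⟨hs.1, hs.2.trans hbw.le⟩),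
    eventually_neg_nhdsLT_of_ne_zero hF
      (eventually_ne_zero_nhdsLT hper hfin (hfreq_neg.mono fun _ => ne_of_lt)) hfreq_neg, ?_⟩
  filter_upwards [Ioo_mem_nhdsGT hbw,
    eventually_ne_zero_nhdsGT hper hfin (hfreq_pos.mono fun _ => ne_of_gt)] with s hs hne
  exact lt_of_le_of_ne (hnonneg ⟨hab.trans hs.1.le, hs.2.le⟩) hne.symm

/-- The integer translates of the points `p i` meet every interval on which `F` passes from negative
to positive values, as do representatives of the stable components. -/
def MeetsUpcrossings {ι : Type*} (F : ℝ → ℝ) (p : ι → ℝ) : Prop :=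
  ∀ ⦃v w : ℝ⦄, v < w → F v < 0 → 0 < F w → ∃ (i : ι) (k : ℤ), p i + k ∈ Ioo v w

variable {ι : Type*} {p : ι → ℝ}

theorem MeetsUpcrossings.add_int (hup : MeetsUpcrossings F p) (k : ι → ℤ) :
    MeetsUpcrossings F fun i => p i + k i := by
  intro v w hvw hv hw
  obtain ⟨i, n, hn⟩ := hup hvw hv hw
  refine ⟨i, n - k i, ?_⟩
  rw [Int.cast_sub, add_add_sub_cancel]
  exact hn

theorem meetsUpcrossings_of_forall_isStableInterval (hF : Continuous F)
    (hper : Function.Periodic F 1)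
    (hfin : Finite (ConnectedComponents {x : ℝ | F x = 0 ∧ x ∈ Icc (0 : ℝ) 1}))
    {a b : ι → ℝ} (hp : ∀ i, p i ∈ Icc (a i) (b i))
    (hexh : ∀ c d, IsStableInterval F c d → ∃ (i : ι) (k : ℤ), c = a i + k ∧ d = b i + k) :
    MeetsUpcrossings F p := by
  intro v w hvw hv hw
  obtain ⟨c, d, hvc, hdw, hcd⟩ := exists_isStableInterval_of_upcrossing hF hper hfin hvw hv hw
  obtain ⟨i, k, rfl, rfl⟩ := hexh c d hcd
  exact ⟨i, k, hvc.trans_le (add_le_add_left (hp i).1 _), (add_le_add_left (hp i).2 _).trans_lt hdw⟩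

end Upcrossings

section FiniteOrder

variable {ι α : Type*} [LinearOrder α]

theorem exists_iterate_eq_of_lt [Finite ι] {ρ : ι → α} {g : ι → ι} {r : ι}
    (hg : ∀ j, j ≠ r → ρ (g j) < ρ j) (j : ι) : ∃ n, g^[n] j = r := by
  by_contra hj
  obtain ⟨i, hi, hmin⟩ := exists_min_image {i | ¬∃ n, g^[n] i = r} ρ (toFinite _) ⟨j, hj⟩
  have hir : i ≠ r := fun h => hi ⟨0, h⟩
  exact (hg i hir).not_ge (hmin (g i) fun ⟨n, hn⟩ => hi ⟨n + 1, hn⟩)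

/-- `N j` counts the steps from `j` to its first exit `σ j`. -/
theorem exists_exit_labelling {g : ι → ι} {E : ι → Prop} (hE : ∀ j, ∃ n, E (g^[n] j)) :
    ∃ (N : ι → ℕ) (σ : ι → ι), (∀ j, E (σ j)) ∧ (∀ j, E j → σ j = j) ∧
      ∀ j, ¬E j → N (g j) < N j ∧ σ (g j) = σ j := by
  classical
  refine ⟨fun j => Nat.find (hE j), fun j => g^[Nat.find (hE j)] j,
    fun j => Nat.find_spec (hE j), fun j hj => ?_, fun j hj => ?_⟩
  · simp [(Nat.find_eq_zero (hE j)).2 hj]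
  · have hfind : Nat.find (hE j) = Nat.find (hE (g j)) + 1 :=
      Nat.find_comp_succ (hE j) (hE (g j)) hj
    simp [hfind]

theorem le_sum_of_le_add_of_lt {s : Finset ι} {N : ι → ℕ} {φ c : ι → ℝ} (hc : ∀ i, 0 ≤ c i)
    (step : ∀ j ∈ s, φ j ≤ c j ∨ ∃ i ∈ s, N i < N j ∧ φ j ≤ c j + φ i) :
    ∀ j ∈ s, φ j ≤ ∑ i ∈ s, c i := by
  classical
  have bound (n : ℕ) : ∀ j ∈ s, N j = n → φ j ≤ ∑ i ∈ s with N i ≤ n, c i := by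
    induction n using Nat.strong_induction_on with
    | _ n ih =>
      rintro j hj rfl
      rcases step j hj with h | ⟨i, hi, hij, h⟩
      · exact h.trans (Finset.single_le_sum (fun i _ => hc i) (by simp [hj]))
      · have later := ih (N i) hij i hi rfl
        have hsub : insert j (s.filter (N · ≤ N i)) ⊆ s.filter (N · ≤ N j) := by
          intro k hk
          simp only [Finset.mem_insert, Finset.mem_filter] at hk ⊢
          rcases hk with rfl | hk
          exacts [⟨hj, le_rfl⟩, ⟨hk.1, hk.2.trans hij.le⟩]
        have hsum := Finset.sum_le_sum_of_subset_of_nonneg hsub fun i _ _ => hc i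
        rw [Finset.sum_insert (by simp [hij])] at hsum
        linarith
  exact fun j hj => (bound _ j hj rfl).trans
    (Finset.sum_le_sum_of_subset_of_nonneg (Finset.filter_subset _ _) fun i _ _ => hc i)

/-- `A` and `B` are the total costs of the edges from the points draining to `a` and to `b`. -/
theorem exists_budget_split [Fintype ι] {X : Type*} {D : X → X → ℝ} (hD : ∀ u v, 0 ≤ D u v)
    (htri : ∀ u v w, D u w ≤ D u v + D v w) {g : ι → ι} {P d : ι → X} {a b : X}
    (hd : ∀ j, d j = a ∨ d j = b ∨ d j = P (g j))
    (hexit : ∀ j, ∃ n, d (g^[n] j) = a ∨ d (g^[n] j) = b) :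
    ∃ A B, 0 ≤ A ∧ 0 ≤ B ∧ A + B = ∑ j, D (P j) (d j) ∧
      ∀ j, D (P j) a ≤ A ∨ D (P j) b ≤ B := by
  classical
  obtain ⟨N, σ, hσ, hself, hstep⟩ :=
    exists_exit_labelling (E := fun j => d j = a ∨ d j = b) hexit
  have cost_to_exit (e : X) (s : Finset ι) (hs : ∀ j, j ∈ s → d (σ j) = e)
      (hinv : ∀ j ∈ s, σ (g j) = σ j → g j ∈ s) :
      ∀ j ∈ s, D (P j) e ≤ ∑ i ∈ s, D (P i) (d i) := by
    refine le_sum_of_le_add_of_lt (N := N) (fun i => hD _ _) fun j hj => ?_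
    by_cases hE : d j = a ∨ d j = b
    · left
      rw [← hs j hj, hself j hE]
    · right
      have hdj : d j = P (g j) := by
        obtain h | h | h := hd j
        exacts [(hE (Or.inl h)).elim, (hE (Or.inr h)).elim, h]
      rw [hdj]
      exact ⟨g j, hinv j hj (hstep j hE).2, (hstep j hE).1, htri _ _ _⟩
  refine ⟨∑ j with d (σ j) = a, D (P j) (d j), ∑ j with ¬d (σ j) = a, D (P j) (d j),
    Finset.sum_nonneg fun _ _ => hD _ _, Finset.sum_nonneg fun _ _ => hD _ _,
    Finset.sum_filter_add_sum_filter_not _ _ _, fun j => ?_⟩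
  by_cases hj : d (σ j) = a
  · exact Or.inl (cost_to_exit a _ (by simp) (by simp +contextual) j (by simpa using hj))
  · exact Or.inr (cost_to_exit b _ (fun i hi => (hσ i).resolve_left (by simpa using hi))
      (by simp +contextual) j (by simpa using hj))

theorem exists_consecutive_of_forall_or {s : Set α} {a b : α} {L R : α → Prop}
    (hs : s.Finite) (ha : a ∈ s) (hb : b ∈ s) (hab : a < b) (hLa : L a) (hRb : R b)
    (hLR : ∀ t ∈ s, L t ∨ R t) :
    ∃ u v, a ≤ u ∧ u < v ∧ v ≤ b ∧ L u ∧ R v ∧ ∀ t ∈ s, t ∉ Ioo u v := by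
  obtain ⟨v, ⟨-, hav, hRv⟩, hvmin⟩ := exists_min_image {t | t ∈ s ∧ a < t ∧ R t} id
    (hs.subset fun _ h => h.1) ⟨b, hb, hab, hRb⟩
  obtain ⟨u, ⟨hus, huv⟩, humax⟩ := exists_max_image {t | t ∈ s ∧ t < v} id
    (hs.subset fun _ h => h.1) ⟨a, ha, hav⟩
  have hau : a ≤ u := humax a ⟨ha, hav⟩
  refine ⟨u, v, hau, huv, hvmin b ⟨hb, hab, hRb⟩, ?_, hRv,
    fun t ht htuv => htuv.1.not_ge (humax t ⟨ht, htuv.2⟩)⟩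
  rcases hau.eq_or_lt with rfl | hau
  · exact hLa
  · exact (hLR u hus).resolve_right fun hRu => huv.not_ge (hvmin u ⟨hus, hau, hRu⟩)

theorem strictMono_of_mem_Icc [Preorder ι] {a b p : ι → α} (hp : ∀ i, p i ∈ Icc (a i) (b i))
    (hord : ∀ i j, i < j → b i < a j) : StrictMono p := fun i j hij =>
  (hp i).2.trans_lt ((hord i j hij).trans_le (hp j).1)

theorem injective_fract_of_mem_Ico {p : ι → ℝ} (hp : ∀ i, p i ∈ Ico (0 : ℝ) 1)
    (hinj : Function.Injective p) : Function.Injective fun i => Int.fract (p i) := by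
  simpa only [Int.fract_eq_self.2 (hp _)] using hinj

theorem exists_lower_neighbours [Finite ι] {P : ι → α} {a : α} (ha : ∀ j, a ≤ P j) :
    ∃ L : ι → α, ∀ j, a ≤ L j ∧ L j ≤ P j ∧ (∀ i, P i < P j → P i ≤ L j) ∧
      (L j = a ∨ ∃ i, P i < P j ∧ L j = P i) := by
  choose L hL hmax using fun j => exists_max_image (insert a (P '' {i | P i < P j})) id
    (toFinite _) (insert_nonempty _ _)
  refine ⟨L, fun j => ⟨hmax j a (mem_insert _ _), ?_,
    fun i hi => hmax j (P i) (mem_insert_of_mem _ (mem_image_of_mem _ hi)), ?_⟩⟩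
  · rcases hL j with h | ⟨i, hi, h⟩
    exacts [h ▸ ha j, h ▸ le_of_lt hi]
  · exact (hL j).imp_right fun ⟨i, hi, h⟩ => ⟨i, hi, h.symm⟩

theorem exists_upper_neighbours [Finite ι] {P : ι → α} {b : α} (hb : ∀ j, P j ≤ b) :
    ∃ R : ι → α, ∀ j, R j ≤ b ∧ P j ≤ R j ∧ (∀ i, P j < P i → R j ≤ P i) ∧
      (R j = b ∨ ∃ i, P j < P i ∧ R j = P i) :=
  exists_lower_neighbours (α := αᵒᵈ) hb

end FiniteOrder

section Cut

variable {ι : Type*} {F : ℝ → ℝ} {p : ι → ℝ} {x : ℝ}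

theorem MeetsUpcrossings.exists_hilltop (hup : MeetsUpcrossings F p) {u v : ℝ} (huv : u ≤ v)
    (hgap : ∀ i (k : ℤ), p i + k ∉ Ioo u v) :
    ∃ y ∈ Icc u v, lineCost F y u = 0 ∧ lineCost F y v = 0 := by
  refine exists_hilltop_of_no_upcrossing huv fun s hs t ht hst hFs => ?_
  by_contra! hFt
  obtain ⟨i, k, hik⟩ := hup hst hFs hFt
  exact hgap i k (Ioo_subset_Ioo hs.1.le ht.2.le hik)

theorem add_int_notMem_Ioo_of_mem_Ico {u v z : ℝ} (hz : z ∈ Ico x (x + 1)) (hu : x ≤ u)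
    (hv : v ≤ x + 1) (hgap : z ∉ Ioo u v) (k : ℤ) : z + k ∉ Ioo u v := by
  intro hk
  have hk_lt : (k : ℝ) < 1 := by linarith [hz.1, hk.2]
  have hk_gt : (-1 : ℝ) < k := by linarith [hz.2, hk.1]
  have hk_zero : k = 0 := by
    have : k < 1 := by exact_mod_cast hk_lt
    have : -1 < k := by exact_mod_cast hk_gt
    omega
  exact hgap (by simpa [hk_zero] using hk)

theorem exists_cut_of_forall_lineCost_le [Finite ι] (hF : Continuous F)
    (hup : MeetsUpcrossings F p) (hp : ∀ i, p i ∈ Ico x (x + 1)) {A B : ℝ} (hA : 0 ≤ A)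
    (hB : 0 ≤ B) (hAB : ∀ j, lineCost F (p j) x ≤ A ∨ lineCost F (p j) (x + 1) ≤ B) :
    ∃ y ∈ Icc x (x + 1), lineCost F y x ≤ A ∧ lineCost F y (x + 1) ≤ B := by
  have hxA : lineCost F x x ≤ A := lineCost_self.trans_le hA
  have hxB : lineCost F (x + 1) (x + 1) ≤ B := lineCost_self.trans_le hB
  obtain ⟨u, v, hxu, huv, hvx, hLu, hRv, hgap⟩ :=
    exists_consecutive_of_forall_or (s := insert x (insert (x + 1) (range p)))
      (L := fun t => lineCost F t x ≤ A) (R := fun t => lineCost F t (x + 1) ≤ B)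
      (toFinite _) (mem_insert _ _) (mem_insert_of_mem _ (mem_insert _ _)) (lt_add_one x) hxA hxB
      (by rintro t (rfl | rfl | ⟨j, rfl⟩); exacts [Or.inl hxA, Or.inr hxB, hAB j])
  obtain ⟨y, hy, hyu, hyv⟩ := hup.exists_hilltop huv.le fun i =>
    add_int_notMem_Ioo_of_mem_Ico (hp i) hxu hvx
      (hgap _ (mem_insert_of_mem _ (mem_insert_of_mem _ (mem_range_self i))))
  refine ⟨y, ⟨hxu.trans hy.1, hy.2.trans hvx⟩, ?_, ?_⟩
  · linarith [lineCost_triangle hF y u x]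
  · linarith [lineCost_triangle hF y v (x + 1)]

theorem exists_lineCost_add_lineCost_le_sum [Fintype ι] (hF : Continuous F)
    (hper : Function.Periodic F 1) (hup : MeetsUpcrossings F p)
    (hp : ∀ i, p i ∈ Ico x (x + 1)) {g : ι → ι} {q : ι → ℝ}
    (hq : ∀ j, q j = x ∨ q j = p (g j)) (hexit : ∀ j, ∃ n, q (g^[n] j) = x) :
    ∃ y ∈ Icc x (x + 1),
      lineCost F y x + lineCost F y (x + 1) ≤ ∑ j, torusCost F (p j) (q j) := by
  have hq_mem (j : ι) : q j ∈ Ico x (x + 1) := by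
    rcases hq j with h | h <;> rw [h]
    exacts [⟨le_rfl, lt_add_one x⟩, hp _]
  choose d hd hdcost using fun j =>
    exists_lineCost_le_torusCost hF hper (Ico_subset_Icc_self (hp j)) (hq_mem j)
  obtain ⟨A, B, hA, hB, hAB, hsplit⟩ := exists_budget_split (D := lineCost F) (P := p) (d := d)
    (g := g) (a := x) (b := x + 1) (fun _ _ => lineCost_nonneg) (lineCost_triangle hF)
    (fun j => by grind) (fun j => (hexit j).imp fun n hn => by grind)
  obtain ⟨y, hy, hyA, hyB⟩ := exists_cut_of_forall_lineCost_le hF hup hp hA hB hsplit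
  refine ⟨y, hy, ?_⟩
  calc lineCost F y x + lineCost F y (x + 1) ≤ A + B := add_le_add hyA hyB
    _ = ∑ j, lineCost F (p j) (d j) := hAB
    _ ≤ ∑ j, torusCost F (p j) (q j) := Finset.sum_le_sum fun j _ => hdcost j

end Cut

section Chains

variable {ι : Type*} {F : ℝ → ℝ} {s : Finset ι} {p : ι → ℝ} {x y : ℝ}

theorem sum_lineCost_le_left (hF : Continuous F) {L : ι → ℝ} {a : ℝ}
    (hinj : InjOn p s) (ha : ∀ j ∈ s, a ≤ L j) (hL : ∀ j ∈ s, L j ≤ p j)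
    (hsep : ∀ i ∈ s, ∀ j ∈ s, p i < p j → p i ≤ L j) (hay : a ≤ y) (hy : ∀ j ∈ s, p j ≤ y) :
    ∑ j ∈ s, lineCost F (p j) (L j) ≤ lineCost F y a := by
  classical
  induction s using Finset.induction_on_max_value p generalizing y with
  | empty => simpa using lineCost_nonneg
  | insert j t hj hmax ih =>
    simp only [Finset.mem_insert, forall_eq_or_imp, Finset.coe_insert] at *
    have hlt (i : ι) (hi : i ∈ t) : p i < p j := (hmax i hi).lt_of_ne fun h =>
      hj (hinj (Or.inr hi) (Or.inl rfl) h ▸ hi)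
    have rest := ih (y := L j) (hinj.mono (subset_insert _ _)) ha.2 hL.2
      (fun i hi k hk => (hsep.2 i hi).2 k hk) ha.1 fun i hi => (hsep.2 i hi).1 (hlt i hi)
    rw [Finset.sum_insert hj]
    calc lineCost F (p j) (L j) + ∑ i ∈ t, lineCost F (p i) (L i)
        ≤ lineCost F (p j) (L j) + lineCost F (L j) a := by gcongr
      _ = lineCost F (p j) a := lineCost_add_of_mem_uIcc hF (mem_uIcc_of_ge ha.1 hL.1)
      _ ≤ lineCost F y a :=
          lineCost_le_of_mem_uIcc_left hF (mem_uIcc_of_ge (ha.1.trans hL.1) hy.1)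

theorem sum_lineCost_le_right (hF : Continuous F) {R : ι → ℝ} {b : ℝ}
    (hinj : InjOn p s) (hb : ∀ j ∈ s, R j ≤ b) (hR : ∀ j ∈ s, p j ≤ R j)
    (hsep : ∀ i ∈ s, ∀ j ∈ s, p j < p i → R j ≤ p i) (hyb : y ≤ b) (hy : ∀ j ∈ s, y ≤ p j) :
    ∑ j ∈ s, lineCost F (p j) (R j) ≤ lineCost F y b := by
  simp only [← lineCost_neg_comp_neg (F := F)]
  exact sum_lineCost_le_left (by fun_prop) (neg_injective.comp_injOn hinj)
    (fun j hj => neg_le_neg (hb j hj)) (fun j hj => neg_le_neg (hR j hj))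
    (fun i hi j hj h => neg_le_neg (hsep i hi j hj (neg_lt_neg_iff.1 h)))
    (neg_le_neg hyb) (fun j hj => neg_le_neg (hy j hj))

theorem exists_left_step (hF : Continuous F) (hper : Function.Periodic F 1) {r j : ι} {l : ℝ}
    (hl : l = x ∨ ∃ i, p i < p j ∧ l = p i) (hwrap : lineCost F x (p r - 1) = 0) :
    ∃ i, (i = r ∨ p i < p j) ∧ torusCost F (p j) (p i) ≤ lineCost F (p j) l := by
  rcases hl with rfl | ⟨i, hij, rfl⟩
  · have hr_shift := torusCost_le_lineCost hF hper (p j) (p r) (-1)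
    rw [Int.cast_neg, Int.cast_one, ← sub_eq_add_neg] at hr_shift
    exact ⟨r, Or.inl rfl, by linarith [lineCost_triangle hF (p j) l (p r - 1)]⟩
  · exact ⟨i, Or.inr hij, by simpa using torusCost_le_lineCost hF hper (p j) (p i) 0⟩

theorem exists_right_step (hF : Continuous F) (hper : Function.Periodic F 1) {r j : ι} {u : ℝ}
    (hr : p r ≤ x + 1) (hjr : p j < p r) (hu : u = x + 1 ∨ ∃ i, p j < p i ∧ u = p i) :
    ∃ i, p j < p i ∧ torusCost F (p j) (p i) ≤ lineCost F (p j) u := by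
  have hdirect (i : ι) : torusCost F (p j) (p i) ≤ lineCost F (p j) (p i) := by
    simpa using torusCost_le_lineCost hF hper (p j) (p i) 0
  rcases hu with rfl | ⟨i, hij, rfl⟩
  · exact ⟨r, hjr, (hdirect r).trans
      (lineCost_le_of_mem_uIcc_right hF (mem_uIcc_of_le hjr.le hr))⟩
  · exact ⟨i, hij, hdirect i⟩

end Chains

section TreeCost

variable {ι : Type*} [Fintype ι] [DecidableEq ι] {F : ℝ → ℝ} {p : ι → ℝ} {x y : ℝ}

/-- The cost on the torus of the tree `g` with root `r` on the points `p i`, together with an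
additional edge from the root to `x`. -/
noncomputable def treeCost (F : ℝ → ℝ) (p : ι → ℝ) (x : ℝ) (r : ι) (g : ι → ι) : ℝ :=
  ∑ j, torusCost F (p j) (Function.update (p ∘ g) r x j)

theorem treeCost_eq_sum_erase_add (r : ι) (g : ι → ι) :
    treeCost F p x r g =
      ∑ j ∈ Finset.univ.erase r, torusCost F (p j) (p (g j)) + torusCost F (p r) x := by
  rw [treeCost, ← Finset.sum_erase_add _ _ (Finset.mem_univ r), Function.update_self]
  congr 1
  refine Finset.sum_congr rfl fun j hj => ?_
  rw [Function.update_of_ne (Finset.ne_of_mem_erase hj), Function.comp_apply]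

theorem treeCost_neg_comp_neg (hF : Continuous F) (hper : Function.Periodic F 1) (r : ι)
    (g : ι → ι) :
    treeCost (fun s => -F (-s)) (fun j => -p j) (-x - 1) r g = treeCost F p x r g := by
  have root_edge : torusCost (fun s => -F (-s)) (-p r) (-x - 1) = torusCost F (p r) x := by
    rw [← torusCost_neg_comp_neg hF hper,
      ← torusCost_add_int_right (periodic_neg_comp_neg hper) _ (-x) (-1)]
    simp [sub_eq_add_neg]
  simp only [treeCost_eq_sum_erase_add, torusCost_neg_comp_neg hF hper, root_edge]

theorem exists_lineCost_add_lineCost_le_treeCost (hF : Continuous F)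
    (hper : Function.Periodic F 1) (hup : MeetsUpcrossings F p)
    (hp : ∀ i, p i ∈ Ico x (x + 1)) {r : ι} {g : ι → ι} (hg : ∀ j, ∃ n, g^[n] j = r) :
    ∃ y ∈ Icc x (x + 1), lineCost F y x + lineCost F y (x + 1) ≤ treeCost F p x r g := by
  refine exists_lineCost_add_lineCost_le_sum hF hper hup hp (g := g) (fun j => ?_)
    fun j => (hg j).imp fun n hn => by rw [hn, Function.update_self]
  rcases eq_or_ne j r with rfl | hj
  · exact Or.inl (Function.update_self ..)
  · exact Or.inr (Function.update_of_ne hj ..)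

theorem exists_tree_treeCost_le_sum {α : Type*} [LinearOrder α] {r : ι} {ρ : ι → α} {c : ι → ℝ}
    (hstep : ∀ j, j ≠ r → ∃ i, ρ i < ρ j ∧ torusCost F (p j) (p i) ≤ c j)
    (hroot : torusCost F (p r) x ≤ c r) :
    ∃ g : ι → ι, (∀ j, ∃ n, g^[n] j = r) ∧ treeCost F p x r g ≤ ∑ j, c j := by
  choose! g hρ hcost using hstep
  refine ⟨g, exists_iterate_eq_of_lt hρ, Finset.sum_le_sum fun j _ => ?_⟩
  rcases eq_or_ne j r with rfl | hj
  · rwa [Function.update_self]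
  · rw [Function.update_of_ne hj]
    exact hcost j hj

/-- Points to the left of `y` step to the left and the others step to the right, up to the root `r`;
wrapping around from the leftmost point to `r` costs no more than reaching `x`. -/
theorem exists_tree_of_le_max (hF : Continuous F) (hper : Function.Periodic F 1)
    (hp : ∀ j, p j ∈ Icc x (x + 1)) (hinj : Function.Injective p) (hy : y ∈ Icc x (x + 1)) {r : ι}
    (hr : ∀ j, p j ≤ p r) (hyr : y ≤ p r)
    (hwrap : ∀ j, p j < y → lineCost F x (p r - 1) = 0) :
    ∃ g : ι → ι, (∀ j, ∃ n, g^[n] j = r) ∧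
      treeCost F p x r g ≤ lineCost F y x + lineCost F y (x + 1) := by
  obtain ⟨L, hL⟩ := exists_lower_neighbours fun j => (hp j).1
  obtain ⟨R, hR⟩ := exists_upper_neighbours fun j => (hp j).2
  let c (j : ι) : ℝ := if p j < y then lineCost F (p j) (L j) else lineCost F (p j) (R j)
  have hsum : ∑ j, c j ≤ lineCost F y x + lineCost F y (x + 1) := by
    rw [Finset.sum_ite]
    exact add_le_add
      (sum_lineCost_le_left hF hinj.injOn (fun j _ => (hL j).1) (fun j _ => (hL j).2.1)
        (fun i _ j _ => (hL j).2.2.1 i) hy.1 fun j hj => (Finset.mem_filter.1 hj).2.le)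
      (sum_lineCost_le_right hF hinj.injOn (fun j _ => (hR j).1) (fun j _ => (hR j).2.1)
        (fun i _ j _ => (hR j).2.2.1 i) hy.2 fun j hj => not_lt.1 (Finset.mem_filter.1 hj).2)
  have hroot : torusCost F (p r) x ≤ c r := by
    have hRr : R r = x + 1 := (hR r).2.2.2.resolve_right fun ⟨i, hi, _⟩ => hi.not_ge (hr i)
    simpa [c, hyr.not_gt, hRr] using torusCost_le_lineCost hF hper (p r) x 1
  -- This rank decreases towards the left on `[x, y)` and then towards the right on `[y, x + 1]`.
  let ρ (j : ι) : ℝ := if p j < y then p j else x + y - 1 - p j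
  have hstep (j : ι) (hjr : j ≠ r) : ∃ i, ρ i < ρ j ∧ torusCost F (p j) (p i) ≤ c j := by
    rcases lt_or_ge (p j) y with hj | hj
    · obtain ⟨i, hi, hcost⟩ := exists_left_step hF hper (hL j).2.2.2 (hwrap j hj)
      refine ⟨i, ?_, by simpa only [c, if_pos hj] using hcost⟩
      rcases hi with rfl | hij
      · simp only [ρ, if_pos hj, if_neg hyr.not_gt]
        linarith [(hp j).1]
      · simpa only [ρ, if_pos hj, if_pos (hij.trans hj)] using hij
    · obtain ⟨i, hij, hcost⟩ := exists_right_step hF hper (hp r).2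
        ((hr j).lt_of_ne (hinj.ne hjr)) (hR j).2.2.2
      refine ⟨i, ?_, by simpa only [c, if_neg hj.not_gt] using hcost⟩
      simp only [ρ, if_neg hj.not_gt, if_neg (hj.trans hij.le).not_gt]
      linarith
  obtain ⟨g, hg, hcost⟩ := exists_tree_treeCost_le_sum hstep hroot
  exact ⟨g, hg, hcost.trans hsum⟩

theorem exists_tree_of_min_le (hF : Continuous F) (hper : Function.Periodic F 1)
    (hp : ∀ j, p j ∈ Icc x (x + 1)) (hinj : Function.Injective p) (hy : y ∈ Icc x (x + 1)) {r : ι}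
    (hr : ∀ j, p r ≤ p j) (hry : p r ≤ y) (hwrap : ∀ j, y < p j → lineCost F x (p r) = 0) :
    ∃ g : ι → ι, (∀ j, ∃ n, g^[n] j = r) ∧
      treeCost F p x r g ≤ lineCost F y x + lineCost F y (x + 1) := by
  have mem_neg {z : ℝ} (hz : z ∈ Icc x (x + 1)) : -z ∈ Icc (-x - 1) (-x - 1 + 1) :=
    ⟨by linarith [hz.2], by linarith [hz.1]⟩
  obtain ⟨g, hg, hcost⟩ := exists_tree_of_le_max (F := fun s => -F (-s)) (p := fun j => -p j)
    (by fun_prop) (periodic_neg_comp_neg hper) (fun j => mem_neg (hp j))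
    (neg_injective.comp hinj) (mem_neg hy) (fun j => neg_le_neg (hr j)) (neg_le_neg hry)
    (fun j hj => by
      rw [← neg_add', ← neg_add', lineCost_neg_comp_neg, ← hwrap j (neg_lt_neg_iff.1 hj)]
      exact_mod_cast lineCost_add_int hper x (p r) 1)
  refine ⟨g, hg, ?_⟩
  rwa [treeCost_neg_comp_neg hF hper, sub_add_cancel, ← neg_add', lineCost_neg_comp_neg,
    lineCost_neg_comp_neg, add_comm] at hcost

/-- When `y` separates the points, a hilltop between the largest one shifted by `-1` and the
smallest one decides which of the two the root has to be. -/
theorem exists_treeCost_le [Nonempty ι] (hF : Continuous F) (hper : Function.Periodic F 1)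
    (hup : MeetsUpcrossings F p) (hp : ∀ i, p i ∈ Icc x (x + 1)) (hinj : Function.Injective p)
    (hy : y ∈ Icc x (x + 1)) :
    ∃ (r : ι) (g : ι → ι), (∀ j, ∃ n, g^[n] j = r) ∧
      treeCost F p x r g ≤ lineCost F y x + lineCost F y (x + 1) := by
  obtain ⟨top, htop⟩ := Finite.exists_max p
  obtain ⟨bot, hbot⟩ := Finite.exists_min p
  have root_top := exists_tree_of_le_max hF hper hp hinj hy htop
  have root_bot := exists_tree_of_min_le hF hper hp hinj hy hbot
  rcases le_or_gt (p top) y with htop_le | hlt_top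
  · exact ⟨bot, root_bot ((hbot top).trans htop_le) fun j hj =>
      absurd hj ((htop j).trans htop_le).not_gt⟩
  rcases le_or_gt y (p bot) with hle_bot | hbot_lt
  · exact ⟨top, root_top hlt_top.le fun j hj => absurd hj (hle_bot.trans (hbot j)).not_gt⟩
  have hgap (i : ι) (k : ℤ) : p i + k ∉ Ioo (p top - 1) (p bot) := by
    intro hk
    have hk_neg : (k : ℝ) < 0 := by linarith [hk.2, hbot i]
    have hk_le : (k : ℝ) ≤ -1 := by
      exact_mod_cast Int.le_sub_one_of_lt (Int.cast_lt_zero.1 hk_neg)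
    linarith [hk.1, htop i]
  have htop_x : p top - 1 ≤ x := by linarith [(hp top).2]
  obtain ⟨h, -, hh_top, hh_bot⟩ := hup.exists_hilltop (htop_x.trans (hp bot).1) hgap
  rcases le_total x h with hxh | hhx
  · refine ⟨top, root_top hlt_top.le fun _ _ => lineCost_nonneg.antisymm' ?_⟩
    exact hh_top ▸ lineCost_le_of_mem_uIcc_left hF (mem_uIcc_of_ge htop_x hxh)
  · refine ⟨bot, root_bot hbot_lt.le fun _ _ => lineCost_nonneg.antisymm' ?_⟩
    exact hh_bot ▸ lineCost_le_of_mem_uIcc_left hF (mem_uIcc_of_le hhx (hp bot).1)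

end TreeCost

section Quasipotential

variable {ι : Type*} [Fintype ι] [DecidableEq ι] {F : ℝ → ℝ} {p : ι → ℝ} {x : ℝ}

/-- The least cost `W(K_i)` of a tree on the points `p j` with root `i`. A tree is encoded by the
map sending each vertex to the head of its outgoing edge; the value at the root is irrelevant. -/
noncomputable def rootPotential (F : ℝ → ℝ) (p : ι → ℝ) (i : ι) : ℝ :=
  ⨅ g : {f : ι → ι // ∀ j, ∃ n, f^[n] j = i},
    ∑ j ∈ Finset.univ.erase i, torusCost F (p j) (p (g.1 j))

/-- The quasipotential `W(x)`; it is `0` when there are no points `p i`. -/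
noncomputable def quasipotential (F : ℝ → ℝ) (p : ι → ℝ) (x : ℝ) : ℝ :=
  ⨅ i, (rootPotential F p i + torusCost F (p i) x)

theorem quasipotential_le_treeCost {r : ι} {g : ι → ι} (hg : ∀ j, ∃ n, g^[n] j = r) :
    quasipotential F p x ≤ treeCost F p x r g := by
  rw [treeCost_eq_sum_erase_add]
  have hroot : rootPotential F p r ≤ ∑ j ∈ Finset.univ.erase r, torusCost F (p j) (p (g j)) :=
    ciInf_le (finite_range _).bddBelow (⟨g, hg⟩ : {f : ι → ι // ∀ j, ∃ n, f^[n] j = r})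
  exact (ciInf_le (finite_range _).bddBelow r).trans (add_le_add_left hroot _)

theorem exists_treeCost_eq_quasipotential [Nonempty ι] :
    ∃ (r : ι) (g : ι → ι), (∀ j, ∃ n, g^[n] j = r) ∧
      treeCost F p x r g = quasipotential F p x := by
  obtain ⟨r, hr⟩ := exists_eq_ciInf_of_finite
    (f := fun i => rootPotential F p i + torusCost F (p i) x)
  have : Nonempty {f : ι → ι // ∀ j, ∃ n, f^[n] j = r} := ⟨⟨fun _ => r, fun _ => ⟨1, rfl⟩⟩⟩
  obtain ⟨g, hg⟩ := exists_eq_ciInf_of_finite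
    (f := fun g : {f : ι → ι // ∀ j, ∃ n, f^[n] j = r} =>
      ∑ j ∈ Finset.univ.erase r, torusCost F (p j) (p (g.1 j)))
  refine ⟨r, g, g.2, ?_⟩
  rw [treeCost_eq_sum_erase_add, hg]
  exact hr

theorem quasipotential_of_isEmpty [IsEmpty ι] : quasipotential F p x = 0 :=
  Real.iInf_of_isEmpty _

theorem quasipotential_add_int (hper : Function.Periodic F 1) (k : ι → ℤ) :
    quasipotential F (fun i => p i + k i) x = quasipotential F p x := by
  simp only [quasipotential, rootPotential, torusCost_add_int_left hper,
    torusCost_add_int_right hper]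

theorem isLeast_quasipotential_of_mem_Ico (hF : Continuous F) (hper : Function.Periodic F 1)
    (hup : MeetsUpcrossings F p) (hp : ∀ i, p i ∈ Ico x (x + 1)) (hinj : Function.Injective p) :
    IsLeast ((fun y => lineCost F y x + lineCost F y (x + 1)) '' Icc x (x + 1))
      (quasipotential F p x) := by
  have hlower : quasipotential F p x ∈
      lowerBounds ((fun y => lineCost F y x + lineCost F y (x + 1)) '' Icc x (x + 1)) := by
    rintro _ ⟨y, hy, rfl⟩
    cases isEmpty_or_nonempty ι
    · rw [quasipotential_of_isEmpty]
      exact add_nonneg lineCost_nonneg lineCost_nonneg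
    · obtain ⟨r, g, hg, hle⟩ :=
        exists_treeCost_le hF hper hup (fun i => Ico_subset_Icc_self (hp i)) hinj hy
      exact (quasipotential_le_treeCost hg).trans hle
  have hattained : ∃ y ∈ Icc x (x + 1),
      lineCost F y x + lineCost F y (x + 1) ≤ quasipotential F p x := by
    cases isEmpty_or_nonempty ι
    · rw [quasipotential_of_isEmpty]
      simpa using exists_lineCost_add_lineCost_le_sum hF hper hup hp (g := id) (q := p)
        isEmptyElim isEmptyElim
    · obtain ⟨r, g, hg, heq⟩ := exists_treeCost_eq_quasipotential (F := F) (p := p) (x := x)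
      exact heq ▸ exists_lineCost_add_lineCost_le_treeCost hF hper hup hp hg
  obtain ⟨y, hy, hle⟩ := hattained
  exact ⟨⟨y, hy, hle.antisymm (hlower ⟨y, hy, rfl⟩)⟩, hlower⟩

theorem isLeast_quasipotential (hF : Continuous F) (hper : Function.Periodic F 1)
    (hup : MeetsUpcrossings F p) (hinj : Function.Injective fun i => Int.fract (p i)) (x : ℝ) :
    IsLeast ((fun y => lineCost F y x + lineCost F y (x + 1)) '' Icc x (x + 1))
      (quasipotential F p x) := by
  let k (i : ι) : ℤ := -toIcoDiv one_pos x (p i)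
  rw [← quasipotential_add_int hper k]
  refine isLeast_quasipotential_of_mem_Ico hF hper (hup.add_int k) (fun i => ?_) fun i j hij => ?_
  · simpa [k, toIcoMod, sub_eq_add_neg] using toIcoMod_mem_Ico one_pos x (p i)
  · exact hinj (by simpa using congrArg Int.fract hij)

end Quasipotential

theorem stmt_17_general {ι : Type*} [Fintype ι] [DecidableEq ι] {F : ℝ → ℝ} {p : ι → ℝ}
    (hF : Continuous F) (hper : Function.Periodic F 1) (hup : MeetsUpcrossings F p)
    (hinj : Function.Injective fun i => Int.fract (p i)) (x : ℝ) :
    quasipotential F p x + sSup ((fun y => ∫ s in x..y, F s) '' Icc x (x + 1))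
      = ∫ s in (0 : ℝ)..1, max (F s) 0 := by
  obtain ⟨⟨y, hy, hyW⟩, hlower⟩ := isLeast_quasipotential hF hper hup hinj x
  have integral_eq (z : ℝ) (hz : z ∈ Icc x (x + 1)) : ∫ s in x..z, F s
      = (∫ s in (0 : ℝ)..1, max (F s) 0) - (lineCost F z x + lineCost F z (x + 1)) := by
    rw [intervalIntegral_eq_sub_lineCost hF hz,
      (periodic_max_zero hper).intervalIntegral_add_eq x 0, zero_add]
  have hmax : IsGreatest ((fun y => ∫ s in x..y, F s) '' Icc x (x + 1))
      ((∫ s in (0 : ℝ)..1, max (F s) 0) - quasipotential F p x) := by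
    refine ⟨⟨y, hy, (integral_eq y hy).trans (congrArg _ hyW)⟩, ?_⟩
    rintro _ ⟨z, hz, rfl⟩
    simp only [integral_eq z hz]
    exact sub_le_sub_left (hlower ⟨z, hz, rfl⟩) _
  rw [hmax.csSup_eq, add_sub_cancel]

/-- Proposition `biancaneve`: for every `x ∈ 𝕋` (every lift
`x ∈ ℝ`), `W(x) + max_{y∈[x,x+1]} (S(y) − S(x)) = ∫₀¹ F₊(s) ds`; in particular
the left-hand side does not depend on `x`.

Setting: `F` is continuous and 1-periodic, `S(x) = ∫₀ˣ F`, and the zero set of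
`F` on the torus has finitely many connected components. The stable components
`K_i = [a i, b i] ⊆ [0,1)` are listed in (clockwise) order, with representative
points `p i ∈ K_i`; the list is exhaustive (every stable component of `{F = 0}`
in `ℝ` is an integer translate of some `[a i, b i]`). The clockwise/anticlockwise
arc integrals `V₊, V₋` are realized by lifting the second endpoint into
`[u, u+1)` via `Int.fract`, `V = min(V₊,V₋)`. For each root `i`, directed trees
on `{1,…,ℓ}` oriented towards `i` are encoded as maps `f : Fin ℓ → Fin ℓ`
(`f j` = head of the unique arrow leaving `j`) such that every vertex reaches
`i` by iterating `f`; `W(K_i)` is the minimum over such trees of the sum of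
`V(K_j, K_{f j})` over `j ≠ i`, and `W(x) = min_i (W(K_i) + V(K_i, x))`
(when `ℓ = 0` both infima over the empty family equal `0` by convention,
matching `W ≡ 0`). -/
theorem stmt_17
    (F : ℝ → ℝ) (hF : Continuous F) (hFper : ∀ x, F (x + 1) = F x)
    (S : ℝ → ℝ) (hS : ∀ x, S x = ∫ t in (0:ℝ)..x, F t)
    (hfin : Finite (ConnectedComponents {x : ℝ | F x = 0 ∧ x ∈ Icc (0:ℝ) 1}))
    (ℓ : ℕ) (a b p : Fin ℓ → ℝ)
    (hrange : ∀ i, 0 ≤ a i ∧ a i ≤ b i ∧ b i < 1)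
    (hord : ∀ i j : Fin ℓ, i < j → b i < a j)
    (hp : ∀ i, p i ∈ Icc (a i) (b i))
    (hstable : ∀ i, (∀ x ∈ Icc (a i) (b i), F x = 0) ∧
      ∃ ε > 0, (∀ x ∈ Ico (a i - ε) (a i), F x < 0) ∧
        (∀ x ∈ Ioc (b i) (b i + ε), 0 < F x))
    (hexh : ∀ a' b' : ℝ, a' ≤ b' → (∀ x ∈ Icc a' b', F x = 0) →
      (∃ ε > 0, (∀ x ∈ Ico (a' - ε) a', F x < 0) ∧
        (∀ x ∈ Ioc b' (b' + ε), 0 < F x)) →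
      ∃ (i : Fin ℓ) (k : ℤ), a' = a i + k ∧ b' = b i + k)
    (Vp Vm : ℝ → ℝ → ℝ)
    (hVp : ∀ u v, Vp u v = ∫ s in u..(u + Int.fract (v - u)), max (F s) 0)
    (hVm : ∀ u v, Vm u v = ∫ s in v..(v + Int.fract (u - v)), max (-F s) 0)
    (WK : Fin ℓ → ℝ)
    (hWK : ∀ i, WK i = ⨅ g : {f : Fin ℓ → Fin ℓ // ∀ j, ∃ n, f^[n] j = i},
      ∑ j ∈ Finset.univ.erase i, min (Vp (p j) (p (g.1 j))) (Vm (p j) (p (g.1 j))))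
    (W : ℝ → ℝ)
    (hW : ∀ x, W x = ⨅ i : Fin ℓ, (WK i + min (Vp (p i) x) (Vm (p i) x))) :
    ∀ x : ℝ, W x + sSup ((fun y => S y - S x) '' Icc x (x + 1))
      = ∫ s in (0:ℝ)..1, max (F s) 0 := by
  intro x
  have hinj : Function.Injective fun i => Int.fract (p i) := injective_fract_of_mem_Ico
    (fun i => ⟨(hrange i).1.trans (hp i).1, (hp i).2.trans_lt (hrange i).2.2⟩)
    (strictMono_of_mem_Icc hp hord).injective
  have hup : MeetsUpcrossings F p :=
    meetsUpcrossings_of_forall_isStableInterval hF hFper hfin hp fun c d h =>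
      hexh c d h.le h.eq_zero h.exists_uniform_margin
  have hprimitive (y : ℝ) : S y - S x = ∫ s in x..y, F s := by
    rw [hS, hS, intervalIntegral.integral_interval_sub_left (hF.intervalIntegrable _ _)
      (hF.intervalIntegrable _ _)]
  simp only [hW, hWK, hVp, hVm, hprimitive]
  exact stmt_17_general hF hFper hup hinj x
end
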